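/- arXiv:1308.5961 — 9 statements merged into one kernel-verified Lean document; each statement's English description precedes it below -/
import Mathlib

section
/- Let ρ be a density matrix and σ a positive semi-definite matrix on a finite-dimensional complex Hilbert space with supp ρ ⊆ supp σ, and let α > 1. Then tr[(σ^{(1−α)/(2α)} ρ σ^{(1−α)/(2α)})^α] ≤ tr(ρ^α σ^{1−α}), and consequently D_α(ρ||σ) ≤ D̃_α(ρ||σ). -/
/-!
The trace inequality is an instance of the Araki–Lieb–Thirring inequality, and it is proved by
complex interpolation. Put `X = σ^t ρ σ^t` with `t = (1-α)/(2α)`, `T = tr X^α` and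
`S = tr (ρ^α σ^{1-α})`. Complex powers of positive semi-definite matrices (vanishing on the
kernel) make

  `F(z) = tr (X^{α(1-z)} σ^{(1-α)z/2} ρ^{αz} σ^{(1-α)z/2})`

an entire function, bounded on the strip `0 ≤ Re z ≤ 1`. Imaginary powers are contractions, so the
Cauchy–Schwarz inequality for the Hilbert–Schmidt inner product gives `|F| ≤ T` on `Re z = 0`
(`norm_interpTrace_le_left`) and `|F| ≤ S` on `Re z = 1` (`norm_interpTrace_le_right`). Since
`F(1/α) = T`, the three lines theorem yields `T ≤ T^{1-1/α} S^{1/α}`, that is `T ≤ S`.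

For the divergences the logarithm has to be monotone at `T`, hence `T > 0` is needed. This is where
the support condition enters: `T = 0` would force `X = 0`, and conjugating by `σ^{-t}` recovers
`ρ` from `X` because `supp ρ ⊆ supp σ`.
-/

open Matrix Filter ComplexOrder

/-- Real power with the convention `0 ^ t = 0` for every `t` (powers taken on the support). -/
noncomputable def rpow0 (x t : ℝ) : ℝ := if x = 0 then 0 else Real.rpow x t

/-- Power of a positive semi-definite (more generally, Hermitian) matrix via the functional
calculus, with the convention `0 ^ t = 0` on the kernel (i.e. powers are taken on the support).
Junk value `0` if the matrix is not Hermitian. -/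
noncomputable def mpow {m : ℕ} (M : Matrix (Fin m) (Fin m) ℂ) (t : ℝ) :
    Matrix (Fin m) (Fin m) ℂ :=
  if hM : M.IsHermitian then hM.cfc (fun x => rpow0 x t) else 0

/-- The orthogonal projection onto the support of a positive semi-definite (more generally,
Hermitian) matrix, via the functional calculus. Junk value `0` if the matrix is not Hermitian. -/
noncomputable def suppProj {m : ℕ} (M : Matrix (Fin m) (Fin m) ℂ) :
    Matrix (Fin m) (Fin m) ℂ :=
  if hM : M.IsHermitian then hM.cfc (fun x => if x = 0 then 0 else 1) else 0

/-- The support (column space) of a matrix. -/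
noncomputable def msupp {m : ℕ} (M : Matrix (Fin m) (Fin m) ℂ) : Submodule ℂ (Fin m → ℂ) :=
  LinearMap.range M.mulVecLin


/-- The quantum Rényi divergence `D_α(ρ‖σ)`. -/
noncomputable def renyiDiv {n : ℕ} (ρ σ : Matrix (Fin n) (Fin n) ℂ) (α : ℝ) : ℝ :=
  (α - 1)⁻¹ * Real.log
    ((mpow (mpow σ ((1 - α) / (2 * α)) * ρ * mpow σ ((1 - α) / (2 * α))) α).trace.re)

/-- The `α`-relative Rényi entropy `D̃_α(ρ‖σ)`. -/
noncomputable def relRenyi {n : ℕ} (ρ σ : Matrix (Fin n) (Fin n) ℂ) (α : ℝ) : ℝ :=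
  (α - 1)⁻¹ * Real.log ((mpow ρ α * mpow σ (1 - α)).trace.re)

/-! ### Complex powers on the support -/

/-- The complex power `x ^ z` of a real number `x ≥ 0`, with the convention `0 ^ z = 0` for
every `z`. -/
noncomputable def cpow0 (x : ℝ) (z : ℂ) : ℂ := if x = 0 then 0 else Complex.exp (z * Real.log x)

lemma cpow0_mul (x : ℝ) (z w : ℂ) : cpow0 x z * cpow0 x w = cpow0 x (z + w) := by
  unfold cpow0
  split_ifs <;> simp [add_mul, Complex.exp_add]

lemma star_cpow0 (x : ℝ) (z : ℂ) : star (cpow0 x z) = cpow0 x (star z) := by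
  unfold cpow0
  split_ifs
  · simp
  · simp [← Complex.exp_conj]

lemma norm_cpow0_le_one (x : ℝ) {z : ℂ} (hz : z.re = 0) : ‖cpow0 x z‖ ≤ 1 := by
  unfold cpow0
  split_ifs
  · simp
  · simp [Complex.norm_exp, hz]

lemma ofReal_rpow0 {x : ℝ} (hx : 0 ≤ x) (t : ℝ) : ((rpow0 x t : ℝ) : ℂ) = cpow0 x t := by
  unfold rpow0 cpow0
  split_ifs with h
  · simp
  · have hpos : 0 < x := lt_of_le_of_ne hx (Ne.symm h)
    change ((x ^ t : ℝ) : ℂ) = _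
    rw [Real.rpow_def_of_pos hpos]
    push_cast
    rw [mul_comm]

lemma cpow0_one {x : ℝ} (hx : 0 ≤ x) : cpow0 x 1 = x := by
  unfold cpow0
  split_ifs with h
  · simp [h]
  · rw [one_mul, ← Complex.ofReal_exp, Real.exp_log (lt_of_le_of_ne hx (Ne.symm h))]

section MatrixPowers

variable {n : ℕ} {M : Matrix (Fin n) (Fin n) ℂ}

/-- The complex power `M ^ z` of a positive semi-definite matrix, taken on its support. -/
noncomputable def cmpow (hM : M.PosSemidef) (z : ℂ) : Matrix (Fin n) (Fin n) ℂ :=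
  Unitary.conjStarAlgAut ℂ _ hM.isHermitian.eigenvectorUnitary
    (diagonal fun i => cpow0 (hM.isHermitian.eigenvalues i) z)

lemma cmpow_mul (hM : M.PosSemidef) (z w : ℂ) : cmpow hM z * cmpow hM w = cmpow hM (z + w) := by
  unfold cmpow
  rw [← map_mul, diagonal_mul_diagonal]
  simp only [cpow0_mul]

lemma conjTranspose_cmpow (hM : M.PosSemidef) (z : ℂ) : (cmpow hM z)ᴴ = cmpow hM (star z) := by
  unfold cmpow
  rw [← star_eq_conjTranspose, ← map_star, star_eq_conjTranspose, diagonal_conjTranspose]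
  congr 2
  ext i
  exact star_cpow0 _ _

lemma conjTranspose_cmpow_ofReal (hM : M.PosSemidef) (t : ℝ) : (cmpow hM t)ᴴ = cmpow hM t := by
  rw [conjTranspose_cmpow]
  simp

lemma cmpow_one (hM : M.PosSemidef) : cmpow hM 1 = M := by
  conv_rhs => rw [hM.isHermitian.spectral_theorem]
  unfold cmpow
  congr 2
  ext i
  exact cpow0_one (hM.eigenvalues_nonneg i)

lemma cmpow_mul_self (hM : M.PosSemidef) (z : ℂ) : cmpow hM z * M = cmpow hM (z + 1) := by
  have h := cmpow_mul hM z 1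
  rwa [cmpow_one] at h

lemma mpow_eq_cmpow (hM : M.PosSemidef) (t : ℝ) : mpow M t = cmpow hM t := by
  unfold mpow cmpow
  rw [dif_pos hM.isHermitian, Matrix.IsHermitian.cfc]
  congr 2
  ext i
  exact ofReal_rpow0 (hM.eigenvalues_nonneg i) t

end MatrixPowers

/-! ### The Hilbert–Schmidt norm -/

section HilbertSchmidt

variable {n : ℕ}

/-- The squared Hilbert–Schmidt norm `tr (Aᴴ A)`, written as a real sum over the entries. -/
noncomputable def hsSq (A : Matrix (Fin n) (Fin n) ℂ) : ℝ := ∑ i, ∑ j, ‖A i j‖ ^ 2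

lemma hsSq_nonneg (A : Matrix (Fin n) (Fin n) ℂ) : 0 ≤ hsSq A := by
  unfold hsSq
  positivity

lemma eq_zero_of_hsSq_eq_zero {A : Matrix (Fin n) (Fin n) ℂ} (h : hsSq A = 0) : A = 0 := by
  unfold hsSq at h
  rw [Finset.sum_eq_zero_iff_of_nonneg (fun i _ => by positivity)] at h
  ext i j
  have h1 := h i (Finset.mem_univ _)
  rw [Finset.sum_eq_zero_iff_of_nonneg (fun i _ => by positivity)] at h1
  simpa using h1 j (Finset.mem_univ _)

lemma hsSq_conjTranspose (A : Matrix (Fin n) (Fin n) ℂ) : hsSq Aᴴ = hsSq A := by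
  unfold hsSq
  rw [Finset.sum_comm]
  simp

lemma ofReal_hsSq (A : Matrix (Fin n) (Fin n) ℂ) : (hsSq A : ℂ) = (A * Aᴴ).trace := by
  simp only [hsSq, trace, diag_apply, mul_apply, conjTranspose_apply]
  push_cast
  refine Finset.sum_congr rfl fun i _ => Finset.sum_congr rfl fun j _ => ?_
  exact (Complex.mul_conj' _).symm

lemma hsSq_unitary_mul {U : Matrix (Fin n) (Fin n) ℂ} (hU : Uᴴ * U = 1)
    (A : Matrix (Fin n) (Fin n) ℂ) : hsSq (U * A) = hsSq A := by
  have h : (hsSq (U * A) : ℂ) = hsSq A := by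
    rw [ofReal_hsSq, ofReal_hsSq, conjTranspose_mul, Matrix.mul_assoc, trace_mul_comm,
      Matrix.mul_assoc, Matrix.mul_assoc, hU, Matrix.mul_one]
  exact_mod_cast h

lemma hsSq_diagonal_mul_le {d : Fin n → ℂ} (hd : ∀ i, ‖d i‖ ≤ 1)
    (A : Matrix (Fin n) (Fin n) ℂ) : hsSq (diagonal d * A) ≤ hsSq A := by
  unfold hsSq
  refine Finset.sum_le_sum fun i _ => Finset.sum_le_sum fun j _ => ?_
  rw [diagonal_mul, norm_mul]
  gcongr
  exact mul_le_of_le_one_left (norm_nonneg _) (hd i)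

/-- Imaginary powers are partial isometries, hence contractions. -/
lemma hsSq_cmpow_mul_le {M : Matrix (Fin n) (Fin n) ℂ} (hM : M.PosSemidef) {z : ℂ}
    (hz : z.re = 0) (A : Matrix (Fin n) (Fin n) ℂ) : hsSq (cmpow hM z * A) ≤ hsSq A := by
  have hU := Unitary.coe_star_mul_self hM.isHermitian.eigenvectorUnitary
  have hU' := Unitary.coe_mul_star_self hM.isHermitian.eigenvectorUnitary
  rw [star_eq_conjTranspose] at hU
  rw [Unitary.coe_star, star_eq_conjTranspose] at hU'
  unfold cmpow
  rw [Unitary.conjStarAlgAut_apply, star_eq_conjTranspose, Matrix.mul_assoc, Matrix.mul_assoc,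
    hsSq_unitary_mul hU]
  refine (hsSq_diagonal_mul_le (fun i => norm_cpow0_le_one _ hz) _).trans ?_
  rw [hsSq_unitary_mul (by rwa [conjTranspose_conjTranspose])]

lemma hsSq_mul_cmpow_le {M : Matrix (Fin n) (Fin n) ℂ} (hM : M.PosSemidef) {z : ℂ}
    (hz : z.re = 0) (A : Matrix (Fin n) (Fin n) ℂ) : hsSq (A * cmpow hM z) ≤ hsSq A := by
  rw [← hsSq_conjTranspose, conjTranspose_mul, conjTranspose_cmpow, ← hsSq_conjTranspose A]
  exact hsSq_cmpow_mul_le hM (by simpa using hz) _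

/-- The Cauchy–Schwarz inequality for the Hilbert–Schmidt inner product, in a form with a common
bound on both factors. -/
lemma norm_trace_mul_le {A B : Matrix (Fin n) (Fin n) ℂ} {c : ℝ} (hA : hsSq A ≤ c)
    (hB : hsSq B ≤ c) : ‖(A * B).trace‖ ≤ c := by
  have h : ‖(A * B).trace‖ ≤ (hsSq A + hsSq Bᴴ) / 2 := by
    simp only [trace, diag_apply, mul_apply, hsSq, ← Finset.sum_add_distrib, Finset.sum_div]
    refine (norm_sum_le _ _).trans (Finset.sum_le_sum fun i _ => ?_)
    refine (norm_sum_le _ _).trans (Finset.sum_le_sum fun j _ => ?_)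
    rw [norm_mul, conjTranspose_apply, norm_star]
    nlinarith [sq_nonneg (‖A i j‖ - ‖B j i‖)]
  rw [hsSq_conjTranspose] at h
  linarith

lemma trace_cmpow_eq_hsSq {M : Matrix (Fin n) (Fin n) ℂ} (hM : M.PosSemidef) (t : ℝ) :
    (cmpow hM t).trace = hsSq (cmpow hM (t / 2 : ℝ)) := by
  rw [ofReal_hsSq, conjTranspose_cmpow_ofReal, cmpow_mul, ← Complex.ofReal_add, add_halves]

lemma trace_cmpow_mul_cmpow_eq_hsSq {M N : Matrix (Fin n) (Fin n) ℂ} (hM : M.PosSemidef)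
    (hN : N.PosSemidef) (s t : ℝ) :
    (cmpow hM s * cmpow hN t).trace = hsSq (cmpow hM (s / 2 : ℝ) * cmpow hN (t / 2 : ℝ)) := by
  rw [ofReal_hsSq, conjTranspose_mul, conjTranspose_cmpow_ofReal, conjTranspose_cmpow_ofReal,
    trace_mul_comm _ (_ * _), Matrix.mul_assoc, ← Matrix.mul_assoc (cmpow hM _), cmpow_mul,
    trace_mul_comm _ (_ * _), Matrix.mul_assoc, cmpow_mul, ← Complex.ofReal_add, ← Complex.ofReal_add,
    add_halves, add_halves]

end HilbertSchmidt

/-! ### Entire functions bounded on the strip -/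

section Strip

/-- Entire functions that are bounded on the closed strip `0 ≤ Re z ≤ 1`. -/
def StripBdd (f : ℂ → ℂ) : Prop :=
  Differentiable ℂ f ∧ ∃ C : ℝ, ∀ z : ℂ, 0 ≤ z.re → z.re ≤ 1 → ‖f z‖ ≤ C

lemma StripBdd.const (c : ℂ) : StripBdd fun _ => c :=
  ⟨differentiable_const c, ‖c‖, fun _ _ _ => le_rfl⟩

lemma StripBdd.mul {f g : ℂ → ℂ} (hf : StripBdd f) (hg : StripBdd g) :
    StripBdd fun z => f z * g z := by
  obtain ⟨hf, C, hC⟩ := hf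
  obtain ⟨hg, D, hD⟩ := hg
  refine ⟨hf.mul hg, C * D, fun z h0 h1 => ?_⟩
  rw [norm_mul]
  exact mul_le_mul (hC z h0 h1) (hD z h0 h1) (norm_nonneg _) ((norm_nonneg _).trans (hC z h0 h1))

lemma StripBdd.sum {ι : Type*} {s : Finset ι} {f : ι → ℂ → ℂ} (hf : ∀ i ∈ s, StripBdd (f i)) :
    StripBdd fun z => ∑ i ∈ s, f i z := by
  choose! hd C hC using hf
  refine ⟨Differentiable.fun_sum hd, ∑ i ∈ s, C i, fun z h0 h1 => ?_⟩
  exact (norm_sum_le _ _).trans (Finset.sum_le_sum fun i hi => hC i hi z h0 h1)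

lemma StripBdd.cpow0 (x a b : ℝ) : StripBdd fun z => cpow0 x (a + b * z) := by
  unfold _root_.cpow0
  split_ifs
  · exact StripBdd.const 0
  · refine ⟨by fun_prop, Real.exp (|a * Real.log x| + |b * Real.log x|), fun z h0 h1 => ?_⟩
    rw [Complex.norm_exp, Real.exp_le_exp]
    have h : ((a + b * z) * (Real.log x : ℂ)).re = a * Real.log x + b * Real.log x * z.re := by
      simp
      ring
    rw [h]
    have h2 : b * Real.log x * z.re ≤ |b * Real.log x| := by
      refine (le_abs_self _).trans ?_
      rw [abs_mul, abs_of_nonneg h0]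
      exact mul_le_of_le_one_right (abs_nonneg _) h1
    linarith [le_abs_self (a * Real.log x)]

variable {n : ℕ}

lemma StripBdd.matrix_mul {A B : ℂ → Matrix (Fin n) (Fin n) ℂ}
    (hA : ∀ i j, StripBdd fun z => A z i j) (hB : ∀ i j, StripBdd fun z => B z i j) (i j : Fin n) :
    StripBdd fun z => (A z * B z) i j := by
  simp only [mul_apply]
  exact StripBdd.sum fun k _ => (hA i k).mul (hB k j)

lemma StripBdd.cmpow {M : Matrix (Fin n) (Fin n) ℂ} (hM : M.PosSemidef) (a b : ℝ) (i j : Fin n) :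
    StripBdd fun z => cmpow hM (a + b * z) i j := by
  unfold _root_.cmpow
  simp only [Unitary.conjStarAlgAut_apply]
  generalize (hM.isHermitian.eigenvectorUnitary : Matrix (Fin n) (Fin n) ℂ) = U
  refine StripBdd.matrix_mul
    (A := fun z => U * diagonal fun i => _root_.cpow0 (hM.isHermitian.eigenvalues i) (a + b * z))
    (B := fun _ => star U)
    (StripBdd.matrix_mul (A := fun _ => U)
      (B := fun z => diagonal fun i => _root_.cpow0 (hM.isHermitian.eigenvalues i) (a + b * z))
      (fun _ _ => StripBdd.const _) fun k l => ?_) (fun _ _ => StripBdd.const _) i j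
  by_cases h : k = l
  · subst h
    simp only [diagonal_apply_eq]
    exact StripBdd.cpow0 _ a b
  · simp only [diagonal_apply_ne _ h]
    exact StripBdd.const 0

end Strip

/-! ### Interpolation between the two traces -/

section Interpolation

variable {n : ℕ} {X ρ σ : Matrix (Fin n) (Fin n) ℂ}

/-- The interpolating function `z ↦ tr (X^{α(1-z)} σ^{(1-α)z/2} ρ^{αz} σ^{(1-α)z/2})`. -/
noncomputable def interpTrace (hX : X.PosSemidef) (hρ : ρ.PosSemidef) (hσ : σ.PosSemidef) (α : ℝ)
    (z : ℂ) : ℂ :=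
  (cmpow hX ((α : ℝ) + (-α : ℝ) * z) * cmpow hσ ((0 : ℝ) + ((1 - α) / 2 : ℝ) * z) *
    cmpow hρ ((0 : ℝ) + (α : ℝ) * z) * cmpow hσ ((0 : ℝ) + ((1 - α) / 2 : ℝ) * z)).trace

lemma stripBdd_interpTrace (hX : X.PosSemidef) (hρ : ρ.PosSemidef) (hσ : σ.PosSemidef) (α : ℝ) :
    StripBdd (interpTrace hX hρ hσ α) := by
  unfold interpTrace
  simp only [trace, diag_apply]
  exact StripBdd.sum fun i _ => StripBdd.matrix_mul (StripBdd.matrix_mul (StripBdd.matrix_mul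
    (StripBdd.cmpow hX _ _) (StripBdd.cmpow hσ _ _)) (StripBdd.cmpow hρ _ _))
    (StripBdd.cmpow hσ _ _) i i

lemma norm_interpTrace_le_left (hX : X.PosSemidef) (hρ : ρ.PosSemidef) (hσ : σ.PosSemidef) (α : ℝ)
    {z : ℂ} (hz : z.re = 0) :
    ‖interpTrace hX hρ hσ α z‖ ≤ hsSq (cmpow hX (α / 2 : ℝ)) := by
  have hsplit : ((α : ℝ) + (-α : ℝ) * z : ℂ) =
      (α / 2 : ℝ) + ((-α : ℝ) * z + (α / 2 : ℝ)) := by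
    push_cast
    ring
  unfold interpTrace
  rw [hsplit, ← cmpow_mul, ← cmpow_mul, Matrix.mul_assoc, Matrix.mul_assoc, Matrix.mul_assoc]
  refine norm_trace_mul_le le_rfl ?_
  rw [← Matrix.mul_assoc, ← Matrix.mul_assoc]
  refine (hsSq_mul_cmpow_le hσ (by simp [hz]) _).trans ?_
  refine (hsSq_mul_cmpow_le hρ (by simp [hz]) _).trans ?_
  refine (hsSq_mul_cmpow_le hσ (by simp [hz]) _).trans ?_
  exact hsSq_cmpow_mul_le hX (by simp [hz]) _

lemma norm_interpTrace_le_right (hX : X.PosSemidef) (hρ : ρ.PosSemidef) (hσ : σ.PosSemidef)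
    (α : ℝ) {z : ℂ} (hz : z.re = 1) :
    ‖interpTrace hX hρ hσ α z‖ ≤ hsSq (cmpow hρ (α / 2 : ℝ) * cmpow hσ ((1 - α) / 2 : ℝ)) := by
  have hsplitρ : ((0 : ℝ) + (α : ℝ) * z : ℂ) =
      (α / 2 : ℝ) + ((α : ℝ) * (z - 1) + (α / 2 : ℝ)) := by
    push_cast
    ring
  -- The imaginary part of the power of `σ` is moved to the outer side of each factor.
  have hσl : cmpow hσ ((0 : ℝ) + ((1 - α) / 2 : ℝ) * z) =
      cmpow hσ (((1 - α) / 2 : ℝ) * (z - 1)) * cmpow hσ ((1 - α) / 2 : ℝ) := by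
    rw [cmpow_mul]
    congr 1
    push_cast
    ring
  have hσr : cmpow hσ ((0 : ℝ) + ((1 - α) / 2 : ℝ) * z) =
      cmpow hσ ((1 - α) / 2 : ℝ) * cmpow hσ (((1 - α) / 2 : ℝ) * (z - 1)) := by
    rw [cmpow_mul]
    congr 1
    push_cast
    ring
  have hassoc : interpTrace hX hρ hσ α z =
      ((cmpow hX ((α : ℝ) + (-α : ℝ) * z) * (cmpow hσ (((1 - α) / 2 : ℝ) * (z - 1)) *
        (cmpow hσ ((1 - α) / 2 : ℝ) * cmpow hρ (α / 2 : ℝ)))) *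
      (cmpow hρ ((α : ℝ) * (z - 1)) * (cmpow hρ (α / 2 : ℝ) *
        cmpow hσ ((1 - α) / 2 : ℝ)) * cmpow hσ (((1 - α) / 2 : ℝ) * (z - 1)))).trace := by
    unfold interpTrace
    rw [hsplitρ, ← cmpow_mul hρ, ← cmpow_mul hρ]
    nth_rw 1 [hσl]
    rw [hσr]
    simp only [Matrix.mul_assoc]
  rw [hassoc]
  refine norm_trace_mul_le ?_ ?_
  · refine (hsSq_cmpow_mul_le hX (by simp [hz]) _).trans ?_
    refine (hsSq_cmpow_mul_le hσ (by simp [hz]) _).trans ?_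
    rw [← hsSq_conjTranspose, conjTranspose_mul, conjTranspose_cmpow_ofReal,
      conjTranspose_cmpow_ofReal]
  · refine (hsSq_mul_cmpow_le hσ (by simp [hz]) _).trans ?_
    exact hsSq_cmpow_mul_le hρ (by simp [hz]) _

/-- The interpolating function takes the value `tr X^α` at `1/α`. -/
lemma interpTrace_inv (hρ : ρ.PosSemidef) (hσ : σ.PosSemidef) {α : ℝ} (hα : 1 < α)
    (hXe : X = cmpow hσ ((1 - α) / (2 * α) : ℝ) * ρ * cmpow hσ ((1 - α) / (2 * α) : ℝ))
    (hX : X.PosSemidef) :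
    interpTrace hX hρ hσ α ((α⁻¹ : ℝ) : ℂ) = (cmpow hX α).trace := by
  have h0 : (α : ℂ) ≠ 0 := by
    exact_mod_cast (by linarith : α ≠ 0)
  have e1 : ((0 : ℝ) + ((1 - α) / 2 : ℝ) * ((α⁻¹ : ℝ) : ℂ) : ℂ) = ((1 - α) / (2 * α) : ℝ) := by
    push_cast
    field_simp
    ring
  have e2 : ((0 : ℝ) + (α : ℝ) * ((α⁻¹ : ℝ) : ℂ) : ℂ) = 1 := by
    push_cast
    field_simp
    ring
  have e3 : ((α : ℝ) + (-α : ℝ) * ((α⁻¹ : ℝ) : ℂ) : ℂ) + 1 = α := by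
    push_cast
    field_simp
    ring
  unfold interpTrace
  rw [e1, e2, cmpow_one, Matrix.mul_assoc, Matrix.mul_assoc, ← Matrix.mul_assoc _ ρ, ← hXe]
  rw [cmpow_mul_self, e3]

/-- The Araki–Lieb–Thirring inequality, stated through Hilbert–Schmidt norms. -/
lemma hsSq_sandwich_le (hρ : ρ.PosSemidef) (hσ : σ.PosSemidef) {α : ℝ} (hα : 1 < α)
    (hXe : X = cmpow hσ ((1 - α) / (2 * α) : ℝ) * ρ * cmpow hσ ((1 - α) / (2 * α) : ℝ))
    (hX : X.PosSemidef) :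
    hsSq (cmpow hX (α / 2 : ℝ)) ≤ hsSq (cmpow hρ (α / 2 : ℝ) * cmpow hσ ((1 - α) / 2 : ℝ)) := by
  have hα0 : 0 < α := by linarith
  obtain ⟨hd, C, hC⟩ := stripBdd_interpTrace hX hρ hσ α
  have h := Complex.HadamardThreeLines.norm_le_interp_of_mem_verticalClosedStrip₀₁'
    (interpTrace hX hρ hσ α) (z := ((α⁻¹ : ℝ) : ℂ))
    (by
      refine ⟨?_, ?_⟩
      · simpa using hα0.le
      · simpa using inv_le_one_of_one_le₀ hα.le)
    hd.diffContOnCl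
    (by
      refine ⟨C, ?_⟩
      rintro _ ⟨z, hz, rfl⟩
      exact hC z hz.1 hz.2)
    (fun z hz => norm_interpTrace_le_left hX hρ hσ α hz)
    (fun z hz => norm_interpTrace_le_right hX hρ hσ α hz)
  rw [interpTrace_inv hρ hσ hα hXe hX, trace_cmpow_eq_hsSq, Complex.norm_real,
    Real.norm_of_nonneg (hsSq_nonneg _), Complex.ofReal_re] at h
  set T := hsSq (cmpow hX (α / 2 : ℝ))
  set S := hsSq (cmpow hρ (α / 2 : ℝ) * cmpow hσ ((1 - α) / 2 : ℝ))
  have hS : 0 ≤ S := hsSq_nonneg _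
  rcases (hsSq_nonneg (cmpow hX (α / 2 : ℝ))).eq_or_lt with hT | hT
  · exact hT.symm.le.trans hS
  · change 0 < T at hT
    have hTT : T = T ^ (1 - α⁻¹) * T ^ α⁻¹ := by
      rw [← Real.rpow_add hT, sub_add_cancel, Real.rpow_one]
    nth_rw 1 [hTT] at h
    have h' := le_of_mul_le_mul_left h (Real.rpow_pos_of_pos hT _)
    exact (Real.rpow_le_rpow_iff hT.le hS (inv_pos.mpr hα0)).mp h'

/-- If `supp ρ ⊆ supp σ`, then the sandwiched matrix `σ^t ρ σ^t` vanishes only for `ρ = 0`. -/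
lemma eq_zero_of_sandwich_eq_zero (hρ : ρ.PosSemidef) (hσ : σ.PosSemidef)
    (hsupp : msupp ρ ≤ msupp σ) (t : ℝ) (h : cmpow hσ t * ρ * cmpow hσ t = 0) : ρ = 0 := by
  have hleft : cmpow hσ 0 * ρ = ρ := by
    refine Matrix.ext_of_mulVec_single fun i => ?_
    obtain ⟨w, hw⟩ := hsupp ⟨Pi.single i 1, rfl⟩
    have hPσ : cmpow hσ 0 * σ = σ := by
      rw [cmpow_mul_self, zero_add, cmpow_one]
    simp only [mulVecLin_apply] at hw
    rw [← mulVec_mulVec, ← hw, mulVec_mulVec, hPσ]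
  have hright : ρ * cmpow hσ 0 = ρ := by
    have h' := congrArg conjTranspose hleft
    rwa [conjTranspose_mul, hρ.isHermitian.eq, conjTranspose_cmpow, star_zero] at h'
  have e1 : cmpow hσ (-t) * cmpow hσ t = cmpow hσ 0 := by
    rw [cmpow_mul, neg_add_cancel]
  have e2 : cmpow hσ t * cmpow hσ (-t) = cmpow hσ 0 := by
    rw [cmpow_mul, add_neg_cancel]
  calc ρ = cmpow hσ 0 * ρ * cmpow hσ 0 := by rw [hleft, hright]
    _ = cmpow hσ (-t) * (cmpow hσ t * ρ * cmpow hσ t) * cmpow hσ (-t) := by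
      rw [← e1]
      nth_rw 2 [e1]
      rw [← e2]
      simp only [Matrix.mul_assoc]
    _ = 0 := by rw [h, Matrix.mul_zero, Matrix.zero_mul]

end Interpolation

/-- For a density matrix `ρ` and positive semi-definite `σ` with `supp ρ ⊆ supp σ`, and `α > 1`,
`tr[(σ^{(1-α)/(2α)} ρ σ^{(1-α)/(2α)})^α] ≤ tr(ρ^α σ^{1-α})`, and consequently
`D_α(ρ‖σ) ≤ D̃_α(ρ‖σ)`. -/
theorem trace_sandwich_le_and_renyiDiv_le_relRenyi {n : ℕ} (ρ σ : Matrix (Fin n) (Fin n) ℂ)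
    (hρ : ρ.PosSemidef) (hρtr : ρ.trace = 1) (hσ : σ.PosSemidef)
    (hsupp : msupp ρ ≤ msupp σ) (α : ℝ) (hα : 1 < α) :
    (mpow (mpow σ ((1 - α) / (2 * α)) * ρ * mpow σ ((1 - α) / (2 * α))) α).trace.re ≤
        (mpow ρ α * mpow σ (1 - α)).trace.re ∧
      renyiDiv ρ σ α ≤ relRenyi ρ σ α := by
  obtain ⟨X, hXe⟩ : ∃ X, X = cmpow hσ ((1 - α) / (2 * α) : ℝ) * ρ *
    cmpow hσ ((1 - α) / (2 * α) : ℝ) := ⟨_, rfl⟩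
  have hX : X.PosSemidef := by
    have h := hρ.mul_mul_conjTranspose_same (cmpow hσ ((1 - α) / (2 * α) : ℝ))
    rwa [conjTranspose_cmpow_ofReal, ← hXe] at h
  have hT : (mpow (mpow σ ((1 - α) / (2 * α)) * ρ * mpow σ ((1 - α) / (2 * α))) α).trace.re =
      hsSq (cmpow hX (α / 2 : ℝ)) := by
    rw [mpow_eq_cmpow hσ, ← hXe, mpow_eq_cmpow hX, trace_cmpow_eq_hsSq, Complex.ofReal_re]
  have hS : (mpow ρ α * mpow σ (1 - α)).trace.re =
      hsSq (cmpow hρ (α / 2 : ℝ) * cmpow hσ ((1 - α) / 2 : ℝ)) := by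
    rw [mpow_eq_cmpow hσ, mpow_eq_cmpow hρ, trace_cmpow_mul_cmpow_eq_hsSq, Complex.ofReal_re]
  have hle := hsSq_sandwich_le hρ hσ hα hXe hX
  have hpos : 0 < hsSq (cmpow hX (α / 2 : ℝ)) := by
    refine lt_of_le_of_ne (hsSq_nonneg _) fun h0 => ?_
    have h1 := eq_zero_of_hsSq_eq_zero h0.symm
    have hX0 : X = 0 := by
      rw [← cmpow_one hX, ← add_sub_cancel ((α / 2 : ℝ) : ℂ) 1, ← cmpow_mul, h1, Matrix.zero_mul]
    have hρ0 := eq_zero_of_sandwich_eq_zero hρ hσ hsupp _ (hXe.symm.trans hX0)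
    rw [hρ0, trace_zero] at hρtr
    exact zero_ne_one hρtr
  unfold renyiDiv relRenyi
  rw [hT, hS]
  refine ⟨hle, ?_⟩
  have hα1 : 0 < α - 1 := by linarith
  exact mul_le_mul_of_nonneg_left (Real.log_le_log hpos hle) (inv_pos.mpr hα1).le
end

section
/- Let ρ be a density matrix and σ a positive semi-definite matrix on a finite-dimensional complex Hilbert space with supp ρ ⊆ supp σ. Then the limit superior, as α → 0 through α ∈ (0,1), of the quantum Rényi divergence D_α(ρ||σ) is at most the 0-relative Rényi entropy D̃_0(ρ||σ) = −log tr(Π_ρ σ). -/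
/-!
Write `Q(α) = tr (σ^s ρ σ^s)^α` with `s = (1-α)/(2α)`, let `Π` be the support projection of `ρ`, and
let `c > 0` be such that `c Π ≤ ρ` (for instance the smallest nonzero eigenvalue of `ρ`).

The engine is a Peierls-Jensen trace inequality (`sum_conj_rpow_le`): if `G` is a contraction, `d ≥ 0`
and `Gᴴ diag(d) G ≤ X`, then `tr (Gᴴ diag(d^α) G) ≤ tr X^α`. It is scalar Jensen for the concave
function `x ↦ x^α` applied in an eigenbasis of `X`. It is used twice:

* with `G` unitary, it gives `tr (c σ^s Π σ^s)^α ≤ Q(α)`;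
* with `G = Uᴴ Π`, where `U` diagonalizes `σ`, it gives
  `c^α tr (Π σ^(1-α)) ≤ tr (c Π σ^(2s) Π)^α`.

The matrices `σ^s Π σ^s` and `Π σ^(2s) Π` have the same characteristic polynomial, so the two bounds
combine to `c^α tr (Π σ^(1-α)) ≤ Q(α)`, whose left side tends to `tr (Π σ)` as `α → 0`. The inclusion
of supports makes `tr (Π σ)` positive, so logarithms may be taken.

Since the limit superior is taken in `ℝ`, a lower bound on `D_α` near `0` is needed as well; it comes
from `Q(α) ≤ n L`, where `L ≥ 1` bounds the eigenvalues of `σ` (`sum_rpow_le`).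
-/

open Matrix Filter ComplexOrder

/-- The `0`-relative Rényi entropy `D̃₀(ρ‖σ) = - log tr(Π_ρ σ)`. -/
noncomputable def relRenyi0 {n : ℕ} (ρ σ : Matrix (Fin n) (Fin n) ℂ) : ℝ :=
  - Real.log ((suppProj ρ * σ).trace.re)

/-- The complex diagonal matrix with real diagonal `d`. -/
noncomputable def dg {n : ℕ} (d : Fin n → ℝ) : Matrix (Fin n) (Fin n) ℂ :=
  diagonal (fun i => (d i : ℂ))

lemma dg_mul {n : ℕ} (d e : Fin n → ℝ) : dg d * dg e = dg (fun i => d i * e i) := by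
  simp [dg, diagonal_mul_diagonal]

lemma dg_conjTranspose {n : ℕ} (d : Fin n → ℝ) : (dg d)ᴴ = dg d := by
  simp only [dg, diagonal_conjTranspose]
  congr 1
  ext i
  simp

lemma dg_posSemidef {n : ℕ} {d : Fin n → ℝ} (hd : ∀ i, 0 ≤ d i) : (dg d).PosSemidef := by
  apply PosSemidef.diagonal
  intro i
  simpa using hd i

lemma dg_sub {n : ℕ} (d e : Fin n → ℝ) : dg d - dg e = dg (fun i => d i - e i) := by
  simp [dg, diagonal_sub]

lemma dg_smul {n : ℕ} (c : ℝ) (d : Fin n → ℝ) : (c : ℂ) • dg d = dg (fun i => c * d i) := by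
  ext i j
  by_cases h : i = j <;> simp [dg, h]

lemma dg_one {n : ℕ} : dg (fun _ : Fin n => 1) = 1 := by
  simp [dg]

lemma trace_dg_mul {n : ℕ} (d : Fin n → ℝ) (N : Matrix (Fin n) (Fin n) ℂ) :
    (dg d * N).trace.re = ∑ j, d j * (N j j).re := by
  simp [dg, Matrix.trace, diagonal_mul]

/-- One eigenbasis serves the matrix and all of its functional calculus. -/
lemma exists_diag {n : ℕ} {M : Matrix (Fin n) (Fin n) ℂ} (hM : M.IsHermitian) :
    ∃ V : Matrix (Fin n) (Fin n) ℂ, Vᴴ * V = 1 ∧ V * Vᴴ = 1 ∧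
      M = V * dg hM.eigenvalues * Vᴴ ∧
      ∀ f : ℝ → ℝ, hM.cfc f = V * dg (fun i => f (hM.eigenvalues i)) * Vᴴ := by
  refine ⟨hM.eigenvectorUnitary, ?_, ?_, ?_, ?_⟩
  · exact Unitary.coe_star_mul_self _
  · exact Unitary.coe_mul_star_self _
  · exact hM.spectral_theorem
  · intro f
    rfl

lemma trace_mpow {n : ℕ} {X : Matrix (Fin n) (Fin n) ℂ} (hX : X.PosSemidef) {α : ℝ}
    (hα : 0 < α) :
    (mpow X α).trace.re = ∑ i, hX.1.eigenvalues i ^ α := by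
  obtain ⟨V, h1, -, -, h4⟩ := exists_diag hX.1
  have h : mpow X α = V * dg (fun i => hX.1.eigenvalues i ^ α) * Vᴴ := by
    unfold mpow
    rw [dif_pos hX.1, h4]
    congr 3
    ext i
    unfold rpow0
    split_ifs with h0
    · rw [h0, Real.zero_rpow hα.ne']
    · rfl
  rw [h, mul_assoc, trace_mul_comm, mul_assoc, h1, trace_dg_mul]
  simp

/-- Jensen for `x ↦ x ^ α` with sub-normalized weights; the missing mass is placed at `0`. -/
lemma sum_mul_rpow_le {n : ℕ} {w d : Fin n → ℝ} (hw : ∀ j, 0 ≤ w j) (hw1 : ∑ j, w j ≤ 1)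
    (hd : ∀ j, 0 ≤ d j) {α : ℝ} (h0 : 0 < α) (h1 : α < 1) :
    ∑ j, w j * d j ^ α ≤ (∑ j, w j * d j) ^ α := by
  have := (Real.concaveOn_rpow h0.le h1.le).le_map_sum (t := Finset.univ)
    (w := fun o : Option (Fin n) => o.elim (1 - ∑ j, w j) w) (p := fun o => o.elim 0 d)
    (by rintro (_ | j) _ <;> simp [hw, hw1]) (by simp [Fintype.sum_option])
    (by rintro (_ | j) _ <;> simp [hd])
  simpa [Fintype.sum_option, Real.zero_rpow h0.ne'] using this

lemma conj_dg_diag {n : ℕ} (d : Fin n → ℝ) (W : Matrix (Fin n) (Fin n) ℂ) (i : Fin n) :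
    ((Wᴴ * dg d * W) i i).re = ∑ j, Complex.normSq (W j i) * d j := by
  rw [Matrix.mul_apply, Complex.re_sum]
  refine Finset.sum_congr rfl fun j _ => ?_
  simp only [dg, mul_diagonal, conjTranspose_apply]
  simp [Complex.normSq_apply]
  ring

/-- Peierls-Jensen trace inequality: if `G` is a contraction and `Gᴴ diag(d) G ≤ X`, then
`tr (Gᴴ diag(d ^ α) G) ≤ tr X ^ α`. -/
lemma sum_conj_rpow_le {n : ℕ} {X G : Matrix (Fin n) (Fin n) ℂ} (hX : X.PosSemidef)
    {d : Fin n → ℝ} (hd : ∀ j, 0 ≤ d j) (hG : (1 - Gᴴ * G).PosSemidef)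
    (hXG : (X - Gᴴ * dg d * G).PosSemidef) {α : ℝ} (h0 : 0 < α) (h1 : α < 1) :
    (Gᴴ * dg (fun j => d j ^ α) * G).trace.re ≤ ∑ i, hX.1.eigenvalues i ^ α := by
  obtain ⟨V, hV1, hV2, hV3, -⟩ := exists_diag hX.1
  have htr : (Gᴴ * dg (fun j => d j ^ α) * G).trace
      = ((G * V)ᴴ * dg (fun j => d j ^ α) * (G * V)).trace := by
    rw [conjTranspose_mul]
    calc (Gᴴ * dg (fun j => d j ^ α) * G).trace
        = (Gᴴ * dg (fun j => d j ^ α) * G * (V * Vᴴ)).trace := by rw [hV2, mul_one]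
      _ = (Vᴴ * (Gᴴ * dg (fun j => d j ^ α) * G * V)).trace := by
          rw [← mul_assoc, trace_mul_comm]
      _ = _ := by simp only [mul_assoc]
  rw [htr, Matrix.trace, Complex.re_sum]
  refine Finset.sum_le_sum fun i _ => ?_
  rw [diag_apply, conj_dg_diag]
  have hmass : ∑ j, Complex.normSq ((G * V) j i) ≤ 1 := by
    have h := (hG.conjTranspose_mul_mul_same V).diag_nonneg (i := i)
    have e : Vᴴ * (1 - Gᴴ * G) * V = 1 - (G * V)ᴴ * dg (fun _ => 1) * (G * V) := by
      rw [dg_one, conjTranspose_mul, mul_sub, sub_mul, mul_one, mul_one, hV1]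
      simp only [mul_assoc]
    rw [e] at h
    have h' := (Complex.le_def.1 h).1
    simp only [Matrix.sub_apply, Complex.sub_re, conj_dg_diag] at h'
    simpa using h'
  have hval : ∑ j, Complex.normSq ((G * V) j i) * d j ≤ hX.1.eigenvalues i := by
    have h := (hXG.conjTranspose_mul_mul_same V).diag_nonneg (i := i)
    have e : Vᴴ * (X - Gᴴ * dg d * G) * V
        = dg hX.1.eigenvalues - (G * V)ᴴ * dg d * (G * V) := by
      rw [mul_sub, sub_mul]
      congr 1
      · conv_lhs => rw [hV3]
        calc _ = (Vᴴ * V) * dg hX.1.eigenvalues * (Vᴴ * V) := by simp only [mul_assoc]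
          _ = _ := by rw [hV1, one_mul, mul_one]
      · rw [conjTranspose_mul]
        simp only [mul_assoc]
    rw [e] at h
    have h' := (Complex.le_def.1 h).1
    simp only [Matrix.sub_apply, Complex.sub_re, conj_dg_diag] at h'
    simpa [dg] using h'
  calc _ ≤ (∑ j, Complex.normSq ((G * V) j i) * d j) ^ α :=
        sum_mul_rpow_le (fun _ => Complex.normSq_nonneg _) hmass hd h0 h1
    _ ≤ _ := Real.rpow_le_rpow
        (Finset.sum_nonneg fun j _ => mul_nonneg (Complex.normSq_nonneg _) (hd j)) hval h0.le

/-- If `tr X ≤ t` then `tr X ^ α ≤ n t ^ α`, since each eigenvalue is at most the trace. -/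
lemma sum_rpow_le {n : ℕ} {X : Matrix (Fin n) (Fin n) ℂ} (hX : X.PosSemidef) {α t : ℝ}
    (h0 : 0 < α) (ht : X.trace.re ≤ t) :
    ∑ i, hX.1.eigenvalues i ^ α ≤ n * t ^ α := by
  have htr : X.trace.re = ∑ i, hX.1.eigenvalues i := by
    rw [hX.1.trace_eq_sum_eigenvalues]
    simp
  calc ∑ i, hX.1.eigenvalues i ^ α ≤ ∑ _i : Fin n, t ^ α := by
        refine Finset.sum_le_sum fun i _ => Real.rpow_le_rpow (hX.eigenvalues_nonneg i) ?_ h0.le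
        refine le_trans ?_ (htr ▸ ht)
        exact Finset.single_le_sum (f := hX.1.eigenvalues)
          (fun j _ => hX.eigenvalues_nonneg j) (Finset.mem_univ i)
    _ = n * t ^ α := by simp

/-- The properties of the support projection: it is a projection fixing `ρ`, and it is dominated by
a multiple of `ρ`. -/
lemma suppProj_props {n : ℕ} {ρ : Matrix (Fin n) (Fin n) ℂ} (hρ : ρ.PosSemidef) :
    (suppProj ρ)ᴴ = suppProj ρ ∧ suppProj ρ * suppProj ρ = suppProj ρ ∧
      suppProj ρ * ρ = ρ ∧ (1 - suppProj ρ).PosSemidef ∧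
      ∃ c : ℝ, 0 < c ∧ (ρ - (c : ℂ) • suppProj ρ).PosSemidef := by
  obtain ⟨V, h1, h2, h3, h4⟩ := exists_diag hρ.1
  set r := hρ.1.eigenvalues with hr
  set p : Fin n → ℝ := fun i => if r i = 0 then 0 else 1 with hp
  have hP : suppProj ρ = V * dg p * Vᴴ := by
    unfold suppProj
    rw [dif_pos hρ.1, h4]
  have hmul : ∀ d e : Fin n → ℝ,
      (V * dg d * Vᴴ) * (V * dg e * Vᴴ) = V * dg (fun i => d i * e i) * Vᴴ := by
    intro d e
    calc _ = V * dg d * (Vᴴ * V) * dg e * Vᴴ := by simp only [mul_assoc]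
      _ = _ := by rw [h1, mul_one, mul_assoc V, dg_mul]
  rw [hP]
  refine ⟨?_, ?_, ?_, ?_, ?_⟩
  · simp only [conjTranspose_mul, conjTranspose_conjTranspose, dg_conjTranspose, mul_assoc]
  · rw [hmul]
    congr 3
    ext i
    simp only [hp]
    split_ifs <;> simp
  · conv_lhs => rw [h3]
    rw [hmul]
    conv_rhs => rw [h3]
    congr 3
    ext i
    simp only [hp]
    split_ifs with h <;> simp [h]
  · have e : 1 - V * dg p * Vᴴ = V * dg (fun i => 1 - p i) * Vᴴ := by
      rw [← dg_sub, dg_one, mul_sub, sub_mul, mul_one, h2]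
    rw [e]
    refine (dg_posSemidef fun i => ?_).mul_mul_conjTranspose_same V
    simp only [hp]
    split_ifs <;> simp
  · have hc : ∃ c : ℝ, 0 < c ∧ ∀ i, r i ≠ 0 → c ≤ r i := by
      have hev : ∀ᶠ c in nhdsWithin (0 : ℝ) (Set.Ioi 0), ∀ i, r i ≠ 0 → c ≤ r i := by
        rw [eventually_all]
        intro i
        by_cases hi : r i = 0
        · simp [hi]
        · have hpos : 0 < r i := lt_of_le_of_ne (hρ.eigenvalues_nonneg i) (Ne.symm hi)
          filter_upwards [Ioo_mem_nhdsGT hpos] with c hc _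
          exact hc.2.le
      obtain ⟨c, hc, hc'⟩ := (hev.and self_mem_nhdsWithin).exists
      exact ⟨c, hc', hc⟩
    obtain ⟨c, hc0, hc⟩ := hc
    refine ⟨c, hc0, ?_⟩
    have e : ρ - (c : ℂ) • (V * dg p * Vᴴ) = V * dg (fun i => r i - c * p i) * Vᴴ := by
      rw [← dg_sub, ← dg_smul, mul_sub, sub_mul, ← h3]
      simp
    rw [e]
    refine (dg_posSemidef fun i => ?_).mul_mul_conjTranspose_same V
    simp only [hp]
    split_ifs with h
    · simp [h]
    · simpa using hc i h

lemma exists_eq_conjTranspose_mul_self {n : ℕ} {σ : Matrix (Fin n) (Fin n) ℂ}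
    (hσ : σ.PosSemidef) : ∃ C : Matrix (Fin n) (Fin n) ℂ, σ = Cᴴ * C := by
  obtain ⟨U, -, -, hU, -⟩ := exists_diag hσ.1
  refine ⟨dg (fun j => √(hσ.1.eigenvalues j)) * Uᴴ, ?_⟩
  have e : dg hσ.1.eigenvalues
      = dg (fun j => √(hσ.1.eigenvalues j)) * dg (fun j => √(hσ.1.eigenvalues j)) := by
    rw [dg_mul]
    congr 1
    ext j
    exact (Real.mul_self_sqrt (hσ.eigenvalues_nonneg j)).symm
  conv_lhs => rw [hU, e]
  simp only [conjTranspose_mul, conjTranspose_conjTranspose, dg_conjTranspose, mul_assoc]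

/-- The inclusion of supports gives `tr (Π σ) > 0`: otherwise `σ Π = 0`, hence `σ ρ = 0`, while
`ρ = σ Z` for some `Z`, so `ρᴴ ρ = Zᴴ σ ρ = 0`. -/
lemma trace_suppProj_mul_pos {n : ℕ} {ρ σ : Matrix (Fin n) (Fin n) ℂ}
    (hρ : ρ.PosSemidef) (hρtr : ρ.trace = 1) (hσ : σ.PosSemidef)
    (hsupp : msupp ρ ≤ msupp σ) : 0 < (suppProj ρ * σ).trace.re := by
  obtain ⟨hP1, hP2, hP3, -, -⟩ := suppProj_props hρ
  set P := suppProj ρ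
  have hps : (Pᴴ * σ * P).PosSemidef := hσ.conjTranspose_mul_mul_same P
  have htr : (P * σ).trace = (Pᴴ * σ * P).trace := by
    rw [hP1, trace_mul_comm (P * σ) P, ← mul_assoc, hP2]
  rw [htr]
  have hnn := hps.trace_nonneg
  refine lt_of_le_of_ne (Complex.le_def.1 hnn).1 fun h => ?_
  have h0 : (Pᴴ * σ * P).trace = 0 :=
    Complex.ext h.symm (Complex.le_def.1 hnn).2.symm
  rw [hps.trace_eq_zero_iff] at h0
  obtain ⟨C, hC⟩ := exists_eq_conjTranspose_mul_self hσ
  have hCP : C * P = 0 := by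
    rw [← conjTranspose_mul_self_eq_zero, conjTranspose_mul, ← h0, hC]
    simp only [mul_assoc]
  have hσρ : σ * ρ = 0 := by
    rw [← hP3, hC, mul_assoc, ← mul_assoc C, hCP]
    simp
  have hZ : ∀ j, ∃ z : Fin n → ℂ, σ *ᵥ z = ρ.col j := by
    intro j
    have : ρ.col j ∈ msupp σ := hsupp ⟨Pi.single j 1, by simp⟩
    obtain ⟨z, hz⟩ := this
    exact ⟨z, by simpa using hz⟩
  choose z hz using hZ
  have hρZ : ρ = σ * (Matrix.of z)ᵀ := by
    ext i j
    have := congrFun (hz j) i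
    simp only [col_apply] at this
    rw [← this]
    rfl
  have : ρᴴ * ρ = 0 := by
    conv_lhs => rw [hρZ]
    rw [conjTranspose_mul, hσ.1.eq, mul_assoc, ← hρZ, hσρ, mul_zero]
  rw [conjTranspose_mul_self_eq_zero] at this
  rw [this] at hρtr
  simp at hρtr

/-- Two-sided bounds on `tr (σ^s ρ σ^s)^α`; here `u j` are the diagonal entries of the support
projection of `ρ` in the eigenbasis of `σ`, so `∑ j, σ_j * u j = tr (Π σ)`. -/
lemma trace_bounds {n : ℕ} {ρ σ : Matrix (Fin n) (Fin n) ℂ}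
    (hρ : ρ.PosSemidef) (hρtr : ρ.trace = 1) (hσ : σ.PosSemidef) :
    ∃ (u : Fin n → ℝ) (c L : ℝ), 0 < c ∧ 0 < L ∧
      (suppProj ρ * σ).trace.re = ∑ j, hσ.1.eigenvalues j * u j ∧
      ∀ α : ℝ, 0 < α → α < 1 →
        (∑ j, (c ^ α * rpow0 (hσ.1.eigenvalues j) (1 - α)) * u j ≤
          (mpow (mpow σ ((1 - α) / (2 * α)) * ρ * mpow σ ((1 - α) / (2 * α))) α).trace.re) ∧
        (mpow (mpow σ ((1 - α) / (2 * α)) * ρ * mpow σ ((1 - α) / (2 * α))) α).trace.re ≤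
          n * L := by
  obtain ⟨hP1, hP2, hP3, hP4, c, hc0, hc⟩ := suppProj_props hρ
  obtain ⟨U, hU1, hU2, hU3, hU4⟩ := exists_diag hσ.1
  set P := suppProj ρ
  set l := hσ.1.eigenvalues with hl
  have hlnn : ∀ j, 0 ≤ l j := hσ.eigenvalues_nonneg
  have hLpos : 0 < 1 + ∑ j, l j := by
    have := Finset.sum_nonneg fun j (_ : j ∈ Finset.univ) => hlnn j
    linarith
  have hL1 : 1 ≤ 1 + ∑ j, l j := by
    have := Finset.sum_nonneg fun j (_ : j ∈ Finset.univ) => hlnn j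
    linarith
  have hlL : ∀ j, l j ≤ 1 + ∑ j, l j := by
    intro j
    have := Finset.single_le_sum (fun j _ => hlnn j) (Finset.mem_univ j)
    linarith
  set L := 1 + ∑ j, l j
  refine ⟨fun j => ((Uᴴ * P * U) j j).re, c, L, hc0, hLpos, ?_, ?_⟩
  · rw [← trace_dg_mul]
    congr 1
    conv_lhs => rw [hU3]
    rw [← mul_assoc, trace_mul_comm, ← mul_assoc, ← mul_assoc, trace_mul_comm]
  intro α h0 h1
  set s := (1 - α) / (2 * α) with hs
  have hspos : 0 < s := by
    apply div_pos <;> linarith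
  have h2s : s + s = (1 - α) / α := by
    rw [hs]; field_simp; ring
  set b : Fin n → ℝ := fun j => rpow0 (l j) s with hb
  have hbnn : ∀ j, 0 ≤ b j := by
    intro j
    simp only [hb, rpow0]
    split_ifs
    · exact le_rfl
    · exact Real.rpow_nonneg (hlnn j) _
  have hbb : ∀ j, b j * b j = rpow0 (l j) ((1 - α) / α) := by
    intro j
    simp only [hb, rpow0]
    split_ifs with h
    · simp
    · have hp : 0 < l j := lt_of_le_of_ne (hlnn j) (Ne.symm h)
      change l j ^ s * l j ^ s = l j ^ ((1 - α) / α)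
      rw [← Real.rpow_add hp, h2s]
  have hB : mpow σ s = U * dg b * Uᴴ := by
    unfold mpow
    rw [dif_pos hσ.1, hU4]
  set B := mpow σ s
  have hBh : Bᴴ = B := by
    rw [hB]
    simp only [conjTranspose_mul, conjTranspose_conjTranspose, dg_conjTranspose, mul_assoc]
  have hBB : B * B = U * dg (fun j => b j * b j) * Uᴴ := by
    rw [hB]
    calc _ = U * dg b * (Uᴴ * U) * dg b * Uᴴ := by simp only [mul_assoc]
      _ = _ := by rw [hU1, mul_one, mul_assoc U, dg_mul]
  have hX : (B * ρ * B).PosSemidef := by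
    have := hρ.conjTranspose_mul_mul_same B
    rwa [hBh] at this
  rw [trace_mpow hX h0]
  constructor
  · have hPps : P.PosSemidef := by
      have := posSemidef_conjTranspose_mul_self P
      rwa [hP1, hP2] at this
    have hcC : (0 : ℂ) ≤ (c : ℂ) := by exact_mod_cast hc0.le
    -- `c σ^s Π σ^s` and `c Π σ^(2s) Π` (below, in the form `Gᴴ diag(d) G`) are `M N` and `N M` for
    -- `M = σ^s Π` and `N = c Π σ^s`, so they have the same eigenvalues.
    have hY1 : (B * ((c : ℂ) • P) * B).PosSemidef := by
      have := (hPps.smul hcC).conjTranspose_mul_mul_same B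
      rwa [hBh] at this
    set G := Uᴴ * P with hG
    have hGh : Gᴴ = P * U := by
      rw [hG, conjTranspose_mul, conjTranspose_conjTranspose, hP1]
    set d : Fin n → ℝ := fun j => c * (b j * b j) with hd
    have hdnn : ∀ j, 0 ≤ d j := fun j => mul_nonneg hc0.le (mul_self_nonneg _)
    have hY2 : (Gᴴ * dg d * G).PosSemidef :=
      (dg_posSemidef hdnn).conjTranspose_mul_mul_same G
    have hflip : hY1.1.eigenvalues = hY2.1.eigenvalues := by
      rw [IsHermitian.eigenvalues_eq_eigenvalues_iff]
      have e1 : B * ((c : ℂ) • P) * B = (B * P) * ((c : ℂ) • (P * B)) := by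
        rw [mul_smul_comm, smul_mul_assoc, mul_smul_comm]
        congr 1
        conv_lhs => rw [← hP2]
        simp only [mul_assoc]
      have e2 : Gᴴ * dg d * G = ((c : ℂ) • (P * B)) * (B * P) := by
        rw [hGh, hG, hd, ← dg_smul, smul_mul_assoc, mul_smul_comm, smul_mul_assoc]
        congr 1
        calc _ = P * (U * dg (fun j => b j * b j) * Uᴴ) * P := by simp only [mul_assoc]
          _ = _ := by rw [← hBB]; simp only [mul_assoc]
      rw [e1, e2, charpoly_mul_comm]
    have hstep1 : ∑ i, hY1.1.eigenvalues i ^ α ≤ ∑ i, hX.1.eigenvalues i ^ α := by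
      obtain ⟨V, hV1, hV2, hV3, -⟩ := exists_diag hY1.1
      have hVc : Vᴴᴴ * Vᴴ = 1 := by rw [conjTranspose_conjTranspose, hV2]
      have := sum_conj_rpow_le hX (G := Vᴴ) (d := hY1.1.eigenvalues)
        hY1.eigenvalues_nonneg (by rw [hVc, sub_self]; exact PosSemidef.zero)
        (by
          rw [conjTranspose_conjTranspose, ← hV3, ← sub_mul, ← mul_sub]
          have := hc.conjTranspose_mul_mul_same B
          rwa [hBh] at this) h0 h1
      rw [conjTranspose_conjTranspose, mul_assoc, trace_mul_comm, mul_assoc, hV1,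
        trace_dg_mul] at this
      simpa using this
    have hstep2 := sum_conj_rpow_le hY2 (G := G) hdnn
      (by
        rw [hGh, hG]
        have e : P * U * (Uᴴ * P) = P := by
          calc _ = P * (U * Uᴴ) * P := by simp only [mul_assoc]
            _ = P := by rw [hU2, mul_one, hP2]
        rw [e]
        exact hP4)
      (by rw [sub_self]; exact PosSemidef.zero) h0 h1
    rw [← hflip] at hstep2
    refine le_trans (le_of_eq ?_) (hstep2.trans hstep1)
    have hdα : ∀ j, d j ^ α = c ^ α * rpow0 (l j) (1 - α) := by
      intro j
      simp only [hd]
      rw [hbb, Real.mul_rpow hc0.le (by rw [← hbb]; exact mul_self_nonneg _)]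
      congr 1
      simp only [rpow0]
      split_ifs with h
      · exact Real.zero_rpow h0.ne'
      · change (l j ^ ((1 - α) / α)) ^ α = l j ^ (1 - α)
        rw [← Real.rpow_mul (hlnn j), div_mul_cancel₀ _ h0.ne']
    simp only [← hdα]
    rw [mul_assoc Gᴴ, trace_mul_comm Gᴴ, mul_assoc (dg _), trace_dg_mul, hGh, hG]
    have e : Uᴴ * P * U = Uᴴ * P * (P * U) := by
      calc Uᴴ * P * U = Uᴴ * (P * P) * U := by rw [hP2]
        _ = _ := by simp only [mul_assoc]
    rw [e]
  · have hρU : ∀ j, 0 ≤ ((Uᴴ * ρ * U) j j).re := fun j =>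
      (Complex.le_def.1 (hρ.conjTranspose_mul_mul_same U).diag_nonneg).1
    have hρU1 : ∑ j, ((Uᴴ * ρ * U) j j).re = 1 := by
      have : (Uᴴ * ρ * U).trace = 1 := by
        rw [mul_assoc, trace_mul_comm, mul_assoc, hU2, mul_one, hρtr]
      have := congrArg Complex.re this
      simpa [Matrix.trace] using this
    have htr : (B * ρ * B).trace.re ≤ L ^ ((1 - α) / α) := by
      have e : (B * ρ * B).trace = (dg (fun j => b j * b j) * (Uᴴ * ρ * U)).trace := by
        rw [trace_mul_comm, ← mul_assoc, hBB, mul_assoc, mul_assoc, trace_mul_comm]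
        simp only [mul_assoc]
      rw [e, trace_dg_mul]
      calc _ ≤ ∑ j, L ^ ((1 - α) / α) * ((Uᴴ * ρ * U) j j).re := by
            refine Finset.sum_le_sum fun j _ => mul_le_mul_of_nonneg_right ?_ (hρU j)
            rw [hbb]
            simp only [rpow0]
            split_ifs
            · exact Real.rpow_nonneg hLpos.le _
            · exact Real.rpow_le_rpow (hlnn j) (hlL j) (by rw [← h2s]; linarith)
        _ = _ := by rw [← Finset.mul_sum, hρU1, mul_one]
    refine (sum_rpow_le hX h0 htr).trans ?_
    refine mul_le_mul_of_nonneg_left ?_ (Nat.cast_nonneg n)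
    rw [← Real.rpow_mul hLpos.le, div_mul_cancel₀ _ h0.ne']
    calc L ^ (1 - α) ≤ L ^ (1 : ℝ) := Real.rpow_le_rpow_of_exponent_le hL1 (by linarith)
      _ = L := Real.rpow_one L

/-- For a density matrix `ρ` and positive semi-definite `σ` with `supp ρ ⊆ supp σ`, the limit
superior of `D_α(ρ‖σ)` as `α → 0` through `α ∈ (0,1)` is at most `D̃₀(ρ‖σ)`. -/
theorem limsup_renyiDiv_le_relRenyi0 {n : ℕ} (ρ σ : Matrix (Fin n) (Fin n) ℂ)
    (hρ : ρ.PosSemidef) (hρtr : ρ.trace = 1) (hσ : σ.PosSemidef)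
    (hsupp : msupp ρ ≤ msupp σ) :
    Filter.limsup (fun α : ℝ => renyiDiv ρ σ α) (nhdsWithin (0 : ℝ) (Set.Ioo (0 : ℝ) 1)) ≤
      relRenyi0 ρ σ := by
  have hT := trace_suppProj_mul_pos hρ hρtr hσ hsupp
  obtain ⟨u, c, L, hc, hL, hTeq, hbd⟩ := trace_bounds hρ hρtr hσ
  set F := nhdsWithin (0 : ℝ) (Set.Ioo (0 : ℝ) 1) with hF
  have hne : F.NeBot := by
    rw [hF, ← mem_closure_iff_nhdsWithin_neBot, closure_Ioo (by norm_num)]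
    simp
  set q : ℝ → ℝ := fun α =>
    ∑ j, (c ^ α * rpow0 (hσ.1.eigenvalues j) (1 - α)) * u j with hq
  have hqlim : Tendsto q F (nhds ((suppProj ρ * σ).trace.re)) := by
    rw [hTeq]
    refine tendsto_nhdsWithin_of_tendsto_nhds ?_
    refine tendsto_finsetSum _ fun j _ => Tendsto.mul_const _ ?_
    have h1 : Tendsto (fun α : ℝ => c ^ α) (nhds 0) (nhds 1) := by
      have := (Real.continuous_const_rpow hc.ne').tendsto (0 : ℝ)
      simpa using this
    by_cases h : hσ.1.eigenvalues j = 0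
    · simp [h, rpow0]
    · have h2 : Tendsto (fun α : ℝ => rpow0 (hσ.1.eigenvalues j) (1 - α)) (nhds 0)
          (nhds (hσ.1.eigenvalues j)) := by
        have := ((Real.continuous_const_rpow h).comp
          (continuous_const.sub continuous_id : Continuous fun α : ℝ => 1 - α)).tendsto (0 : ℝ)
        simpa [rpow0, h, Function.comp_def] using this
      simpa using h1.mul h2
  have hIoo : ∀ᶠ α in F, α ∈ Set.Ioo (0 : ℝ) 1 := self_mem_nhdsWithin
  have hqpos : ∀ᶠ α in F, 0 < q α := hqlim.eventually_const_lt hT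
  have hvlim : Tendsto (fun α : ℝ => (α - 1)⁻¹ * Real.log (q α)) F
      (nhds (relRenyi0 ρ σ)) := by
    have h1 : Tendsto (fun α : ℝ => (α - 1)⁻¹) F (nhds (-1)) := by
      refine tendsto_nhdsWithin_of_tendsto_nhds ?_
      have : Tendsto (fun α : ℝ => α - 1) (nhds 0) (nhds (-1)) := by
        have := (continuous_sub_right (1 : ℝ)).tendsto 0
        simpa using this
      have := this.inv₀ (by norm_num)
      simpa using this
    have := h1.mul (hqlim.log hT.ne')
    simpa [relRenyi0] using this
  rw [← hvlim.limsup_eq]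
  refine limsup_le_limsup ?_ ?_ hvlim.isBoundedUnder_le
  · filter_upwards [hIoo, hqpos] with α hα hpos
    refine mul_le_mul_of_nonpos_left (Real.log_le_log hpos (hbd α hα.1 hα.2).1) ?_
    exact inv_nonpos.2 (by linarith [hα.2])
  · -- the lower bound on `D_α`, without which the real-valued limsup could be a junk value
    refine IsBoundedUnder.isCoboundedUnder_le ⟨-2 * |Real.log (n * L)|, ?_⟩
    rw [eventually_map]
    have hhalf : ∀ᶠ α in F, α < 1 / 2 :=
      nhdsWithin_le_nhds (Iio_mem_nhds (by norm_num))
    filter_upwards [hIoo, hqpos, hhalf] with α hα hpos hh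
    obtain ⟨hb1, hb2⟩ := hbd α hα.1 hα.2
    have hlog := Real.log_le_log (hpos.trans_le hb1) hb2
    have hinv : (α - 1)⁻¹ = -(1 - α)⁻¹ := by rw [← inv_neg, neg_sub]
    have hi0 : 0 ≤ (1 - α)⁻¹ := inv_nonneg.2 (by linarith)
    have hi2 : (1 - α)⁻¹ ≤ 2 := by
      rw [inv_le_comm₀ (by linarith) (by norm_num)]
      linarith
    change -2 * |Real.log (n * L)| ≤ renyiDiv ρ σ α
    unfold renyiDiv
    rw [hinv]
    have := mul_le_mul_of_nonneg_left (hlog.trans (le_abs_self _)) hi0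
    have := mul_le_mul_of_nonneg_right hi2 (abs_nonneg (Real.log (n * L)))
    linarith
end

section
/- Let P_1, …, P_m be orthogonal projections on an n-dimensional complex Hilbert space forming a projection-valued measure, i.e. P_i P_j = 0 for i ≠ j and Σ_{i=1}^m P_i = I. Then for every density matrix ρ, one has ρ ≤ m · Σ_{i=1}^m P_i ρ P_i in the Loewner (positive semi-definite) order. -/
/-!
The inequality is a variance-type identity: since `∑ i, P i = 1`, expanding the products gives
`∑ i, ∑ j, (P i - P j) * ρ * (P i - P j) = 2 • (m • ∑ i, P i * ρ * P i - ρ)`,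
the cross terms summing to `(∑ i, P i) * ρ * (∑ j, P j) = ρ`. Each summand on the left is a
congruence of `ρ` by a Hermitian matrix, hence positive semi-definite.
-/

open Matrix Filter ComplexOrder

/-- The variance identity behind the pinching inequality. -/
lemma sum_sub_mul_mul_sub {n m : ℕ} (P : Fin m → Matrix (Fin n) (Fin n) ℂ)
    (hsum : ∑ i, P i = 1) (ρ : Matrix (Fin n) (Fin n) ℂ) :
    ∑ i, ∑ j, (P i - P j) * ρ * (P i - P j) =
      (2 : ℂ) • ((m : ℂ) • ∑ i, P i * ρ * P i - ρ) := by
  have hcross : ∑ i, ∑ j, P i * ρ * P j = ρ := by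
    simp_rw [← Finset.mul_sum, ← Finset.sum_mul, hsum, one_mul, mul_one]
  have hcross' : ∑ i, ∑ j, P j * ρ * P i = ρ := by
    rw [Finset.sum_comm, hcross]
  have hexp : ∀ i j, (P i - P j) * ρ * (P i - P j) =
      P i * ρ * P i + P j * ρ * P j - P i * ρ * P j - P j * ρ * P i := by
    intro i j
    noncomm_ring
  simp_rw [hexp, Finset.sum_sub_distrib, Finset.sum_add_distrib, hcross, hcross',
    Finset.sum_const, Finset.card_univ, Fintype.card_fin, ← Finset.smul_sum,
    ← Nat.cast_smul_eq_nsmul ℂ]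
  module

/-- **Pinching inequality.** If `P 1, …, P m` are orthogonal projections forming a
projection-valued measure (`P i * P j = 0` for `i ≠ j` and `∑ i, P i = 1`), then for every
density matrix `ρ` one has `ρ ≤ m • ∑ i, P i * ρ * P i` in the Loewner order. -/
theorem pinching_le {n m : ℕ} (P : Fin m → Matrix (Fin n) (Fin n) ℂ)
    (hherm : ∀ i, (P i).IsHermitian) (hidem : ∀ i, P i * P i = P i)
    (horth : ∀ i j, i ≠ j → P i * P j = 0) (hsum : ∑ i, P i = 1)
    (ρ : Matrix (Fin n) (Fin n) ℂ) (hρ : ρ.PosSemidef) (hρtr : ρ.trace = 1) :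
    ((m : ℂ) • ∑ i, P i * ρ * P i - ρ).PosSemidef := by
  have hpos : (∑ i, ∑ j, (P i - P j) * ρ * (P i - P j)).PosSemidef := by
    refine posSemidef_sum _ fun i _ => posSemidef_sum _ fun j _ => ?_
    have h := hρ.mul_mul_conjTranspose_same (P i - P j)
    rwa [((hherm i).sub (hherm j)).eq] at h
  rw [sum_sub_mul_mul_sub P hsum ρ] at hpos
  have h := hpos.smul (show (0 : ℂ) ≤ 2⁻¹ by positivity)
  rwa [inv_smul_smul₀ (two_ne_zero : (2 : ℂ) ≠ 0)] at h
end

section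
/- Let (|ψ_1⟩, …, |ψ_n⟩) be an orthonormal basis of an n-dimensional complex Hilbert space and π_j = |ψ_j⟩⟨ψ_j| the corresponding rank-one projections. Then for every density matrix ρ, one has ρ ≤ n · Σ_{j=1}^n π_j ρ π_j in the Loewner (positive semi-definite) order. -/
/-!
Write `P j = |ψ j⟩⟨ψ j|`. The `P j` are Hermitian and, by orthonormality, sum to the identity.
Expanding the products and using `∑ i, ∑ j, P i * ρ * P j = ρ` gives
`n • ∑ j, P j * ρ * P j - ρ = (1 / 2) • ∑ i, ∑ j, (P i - P j) * ρ * (P i - P j)`,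
and every summand on the right is a congruence of the positive semi-definite matrix `ρ`.
-/

open Matrix Filter ComplexOrder

/-- Completeness relation: in `ℂ^n`, `n` orthonormal vectors resolve the identity, because a
square matrix with a left inverse is invertible with the same right inverse. -/
lemma sum_vecMulVec_star_eq_one {n : ℕ} (ψ : Fin n → (Fin n → ℂ))
    (hortho : ∀ i j, star (ψ i) ⬝ᵥ ψ j = if i = j then (1 : ℂ) else 0) :
    ∑ j, vecMulVec (ψ j) (star (ψ j)) = (1 : Matrix (Fin n) (Fin n) ℂ) := by
  -- `A` has the `ψ j` as columns, so that `Aᴴ * A` is their Gram matrix.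
  let A : Matrix (Fin n) (Fin n) ℂ := Matrix.of fun a j => ψ j a
  have hA : Aᴴ * A = 1 := by
    ext i j
    simpa [A, Matrix.mul_apply, dotProduct, Matrix.one_apply] using hortho i j
  rw [← mul_eq_one_comm.mp hA]
  ext a b
  simp [A, Matrix.mul_apply, Matrix.sum_apply, vecMulVec_apply]

/-- For Hermitian `P j` and positive semi-definite `ρ` the right-hand side is manifestly positive
semi-definite; the identity itself only uses that the `P j` sum to the identity. -/
lemma two_smul_pinching_sub {n : ℕ} (P : Fin n → Matrix (Fin n) (Fin n) ℂ)
    (hP : ∑ j, P j = 1) (ρ : Matrix (Fin n) (Fin n) ℂ) :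
    (2 : ℂ) • ((n : ℂ) • ∑ j, P j * ρ * P j - ρ) =
      ∑ i, ∑ j, (P i - P j) * ρ * (P i - P j) := by
  have hcross : ∑ i, ∑ j, P i * ρ * P j = ρ := by
    simp_rw [← Finset.mul_sum, hP, mul_one, ← Finset.sum_mul, hP, one_mul]
  have hcross' : ∑ i, ∑ j, P j * ρ * P i = ρ := by
    rw [Finset.sum_comm, hcross]
  have hexp : ∀ i j, (P i - P j) * ρ * (P i - P j) =
      P i * ρ * P i + P j * ρ * P j - P i * ρ * P j - P j * ρ * P i := by
    intro i j
    noncomm_ring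
  simp only [hexp, Finset.sum_sub_distrib, Finset.sum_add_distrib, hcross, hcross',
    Finset.sum_const, Finset.card_univ, Fintype.card_fin, ← Finset.smul_sum,
    ← Nat.cast_smul_eq_nsmul ℂ]
  module

/-- **Pinching with rank-one projections.** If `(ψ 1, …, ψ n)` is an orthonormal basis of
`ℂ^n` and `π j = |ψ j⟩⟨ψ j|` are the corresponding rank-one projections, then for every
density matrix `ρ` one has `ρ ≤ n • ∑ j, π j * ρ * π j` in the Loewner order. -/
theorem pinching_le_rank_one {n : ℕ} (ψ : Fin n → (Fin n → ℂ))
    (hortho : ∀ i j, star (ψ i) ⬝ᵥ ψ j = if i = j then (1 : ℂ) else 0)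
    (ρ : Matrix (Fin n) (Fin n) ℂ) (hρ : ρ.PosSemidef) (hρtr : ρ.trace = 1) :
    ((n : ℂ) • ∑ j, (vecMulVec (ψ j) (star (ψ j))) * ρ * (vecMulVec (ψ j) (star (ψ j))) - ρ).PosSemidef := by
  set P : Fin n → Matrix (Fin n) (Fin n) ℂ := fun j => vecMulVec (ψ j) (star (ψ j)) with hPdef
  have hherm : ∀ j, (P j)ᴴ = P j := fun j => by
    simp [P, conjTranspose_vecMulVec]
  have hsq := two_smul_pinching_sub P (sum_vecMulVec_star_eq_one ψ hortho) ρ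
  have hpos : (∑ i, ∑ j, (P i - P j) * ρ * (P i - P j)).PosSemidef := by
    refine posSemidef_sum _ fun i _ => posSemidef_sum _ fun j _ => ?_
    have h := hρ.mul_mul_conjTranspose_same (P i - P j)
    rwa [conjTranspose_sub, hherm, hherm] at h
  rw [← hsq] at hpos
  have h := hpos.smul (show (0 : ℂ) ≤ 2⁻¹ by positivity)
  rwa [smul_smul, inv_mul_cancel₀ two_ne_zero, one_smul] at h
end

section
/- Let ρ be a density matrix and σ a positive semi-definite matrix on an n-dimensional complex Hilbert space, with σ = Σ_{j=1}^n s_j |ψ_j⟩⟨ψ_j| an eigenvalue decomposition of σ with orthonormal eigenvectors ψ_j and eigenvalues s_j ≥ 0, and let ρ = Σ_{i=1}^n r_i |φ_i⟩⟨φ_i| be an eigenvalue decomposition of ρ. Set μ_j := Σ_{i=1}^n r_i |⟨φ_i|ψ_j⟩|². Then for every α ∈ (0,1), writing β = (1−α)/(2α) and C_α = σ^β ρ σ^β, one has tr(C_α^α) ≤ n^α · Σ_{j=1}^n s_j^{1−α} μ_j^α. -/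
/-!
Write `A = σ ^ β` and `C = A ρ A`. Each `ψ j` is an eigenvector of `A` with eigenvalue `s j ^ β`, so
`⟨ψ j, C ψ j⟩ = s j ^ (2β) * μ j`, and since `2 * β * α = 1 - α` the `α`-th power of this number is
`s j ^ (1 - α) * μ j ^ α`. By the Peierls inequality `trace_cfc_le_sum_expect` for the concave
function `x ↦ x ^ α`, `tr (C ^ α) ≤ ∑ j, ⟨ψ j, C ψ j⟩ ^ α`; the factor `n ^ α ≥ 1` only weakens
the bound (`n ≥ 1` because `tr ρ = 1`).
-/


open Matrix Filter ComplexOrder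

lemma cfc_mulVec_of_eigenvector {m : ℕ} {M : Matrix (Fin m) (Fin m) ℂ} (hM : M.IsHermitian)
    (f : ℝ → ℝ) (v : Fin m → ℂ) (c : ℝ) (hv : M *ᵥ v = (c : ℂ) • v) :
    hM.cfc f *ᵥ v = (f c : ℂ) • v := by
  set U : Matrix (Fin m) (Fin m) ℂ := (hM.eigenvectorUnitary : Matrix (Fin m) (Fin m) ℂ) with hU
  have hUU : Uᴴ * U = 1 := Unitary.coe_star_mul_self hM.eigenvectorUnitary
  have hUU' : U * Uᴴ = 1 := Unitary.coe_mul_star_self hM.eigenvectorUnitary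
  have hspec : M = U * diagonal (fun k => (hM.eigenvalues k : ℂ)) * Uᴴ := by
    have := hM.spectral_theorem
    rw [Unitary.conjStarAlgAut_apply] at this
    exact this
  have hcfc : hM.cfc f = U * diagonal (fun k => (f (hM.eigenvalues k) : ℂ)) * Uᴴ := by
    rw [Matrix.IsHermitian.cfc, Unitary.conjStarAlgAut_apply]
    rfl
  set w := Uᴴ *ᵥ v with hw
  have h1 : diagonal (fun k => (hM.eigenvalues k : ℂ)) *ᵥ w = (c : ℂ) • w := by
    have : Uᴴ *ᵥ (M *ᵥ v) = (c : ℂ) • w := by rw [hv, mulVec_smul]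
    have hUM : Uᴴ * M = diagonal (fun k => (hM.eigenvalues k : ℂ)) * Uᴴ := by
      conv_lhs => rw [hspec]
      simp only [← Matrix.mul_assoc, hUU, Matrix.one_mul]
    rw [← this, hw, mulVec_mulVec, mulVec_mulVec, hUM]
  have h2 : diagonal (fun k => (f (hM.eigenvalues k) : ℂ)) *ᵥ w = (f c : ℂ) • w := by
    ext k
    have hk := congrFun h1 k
    simp only [mulVec_diagonal, Pi.smul_apply, smul_eq_mul] at hk ⊢
    by_cases h0 : w k = 0
    · simp [h0]
    · have : hM.eigenvalues k = c := by exact_mod_cast mul_right_cancel₀ h0 hk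
      rw [this]
  have h3 : U *ᵥ w = v := by rw [hw, mulVec_mulVec, hUU', one_mulVec]
  rw [hcfc, ← mulVec_mulVec, ← hw, ← mulVec_mulVec, h2, mulVec_smul, h3]

/-- **Peierls inequality**: for `f` concave on `[0, ∞)`, `C` positive semi-definite and `ψ`
orthonormal, `tr (f C) ≤ ∑ j, f ⟨ψ j, C ψ j⟩`. The squared overlaps of `ψ` with an eigenbasis of
`C` form a doubly stochastic matrix, so Jensen's inequality applies to each `j`. -/
lemma trace_cfc_le_sum_expect {m : ℕ} {C : Matrix (Fin m) (Fin m) ℂ} (hC : C.PosSemidef)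
    (f : ℝ → ℝ) (hf : ConcaveOn ℝ (Set.Ici 0) f) (ψ : Fin m → (Fin m → ℂ))
    (hψ : ∀ i j, star (ψ i) ⬝ᵥ ψ j = if i = j then (1 : ℂ) else 0) :
    (hC.isHermitian.cfc f).trace.re ≤ ∑ j, f (star (ψ j) ⬝ᵥ (C *ᵥ ψ j)).re := by
  have hM := hC.isHermitian
  set U : Matrix (Fin m) (Fin m) ℂ := (hM.eigenvectorUnitary : Matrix (Fin m) (Fin m) ℂ) with hU
  have hUU : Uᴴ * U = 1 := Unitary.coe_star_mul_self hM.eigenvectorUnitary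
  have hUU' : U * Uᴴ = 1 := Unitary.coe_mul_star_self hM.eigenvectorUnitary
  have hspec : C = U * diagonal (fun k => (hM.eigenvalues k : ℂ)) * Uᴴ := by
    have := hM.spectral_theorem
    rw [Unitary.conjStarAlgAut_apply] at this
    exact this
  have hcfc : hM.cfc f = U * diagonal (fun k => (f (hM.eigenvalues k) : ℂ)) * Uᴴ := by
    rw [Matrix.IsHermitian.cfc, Unitary.conjStarAlgAut_apply]
    rfl
  have htr : (hM.cfc f).trace.re = ∑ k, f (hM.eigenvalues k) := by
    rw [hcfc, trace_mul_comm, ← Matrix.mul_assoc, hUU, Matrix.one_mul, trace_diagonal]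
    simp
  set Ψ : Matrix (Fin m) (Fin m) ℂ := Matrix.of fun i j => ψ j i with hΨdef
  have hΨ : Ψᴴ * Ψ = 1 := by
    ext i j
    rw [one_apply, ← hψ i j]
    rfl
  set W := Uᴴ * Ψ with hW
  have hWW : Wᴴ * W = 1 := by
    rw [hW, conjTranspose_mul, conjTranspose_conjTranspose, Matrix.mul_assoc,
      ← Matrix.mul_assoc U, hUU', Matrix.one_mul, hΨ]
  have hWW' : W * Wᴴ = 1 := mul_eq_one_comm.mp hWW
  have hcol : ∀ j, ∑ k, Complex.normSq (W k j) = 1 := by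
    intro j
    have h := congrFun (congrFun hWW j) j
    simp only [mul_apply, conjTranspose_apply, one_apply_eq, RCLike.star_def,
      ← Complex.normSq_eq_conj_mul_self] at h
    exact_mod_cast h
  have hrow : ∀ k, ∑ j, Complex.normSq (W k j) = 1 := by
    intro k
    have h := congrFun (congrFun hWW' k) k
    simp only [mul_apply, conjTranspose_apply, one_apply_eq, RCLike.star_def,
      Complex.mul_conj] at h
    exact_mod_cast h
  have hexp : ∀ j, (star (ψ j) ⬝ᵥ (C *ᵥ ψ j)).re
      = ∑ k, Complex.normSq (W k j) * hM.eigenvalues k := by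
    intro j
    have h1 : star (ψ j) ⬝ᵥ (C *ᵥ ψ j) = (Ψᴴ * (C * Ψ)) j j := rfl
    have h2 : Ψᴴ * (C * Ψ) = Wᴴ * (diagonal (fun k => (hM.eigenvalues k : ℂ)) * W) := by
      rw [hW, conjTranspose_mul, conjTranspose_conjTranspose]
      conv_lhs => rw [hspec]
      simp only [Matrix.mul_assoc]
    have h3 : star (ψ j) ⬝ᵥ (C *ᵥ ψ j)
        = ((∑ k, Complex.normSq (W k j) * hM.eigenvalues k : ℝ) : ℂ) := by
      rw [h1, h2, mul_apply]
      push_cast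
      refine Finset.sum_congr rfl fun k _ => ?_
      rw [diagonal_mul, conjTranspose_apply, RCLike.star_def, Complex.normSq_eq_conj_mul_self]
      ring
    rw [h3, Complex.ofReal_re]
  rw [htr]
  calc ∑ k, f (hM.eigenvalues k)
      = ∑ k, ∑ j, Complex.normSq (W k j) * f (hM.eigenvalues k) := by
        refine Finset.sum_congr rfl fun k _ => ?_
        rw [← Finset.sum_mul, hrow, one_mul]
    _ = ∑ j, ∑ k, Complex.normSq (W k j) * f (hM.eigenvalues k) := Finset.sum_comm
    _ ≤ _ := by
        refine Finset.sum_le_sum fun j _ => ?_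
        rw [hexp j]
        exact hf.le_map_sum (fun k _ => Complex.normSq_nonneg _) (hcol j)
          (fun k _ => hC.eigenvalues_nonneg k)

lemma rpow0_eq {t : ℝ} (ht : 0 < t) (x : ℝ) : rpow0 x t = x ^ t := by
  unfold rpow0
  split_ifs with h
  · rw [h, Real.zero_rpow ht.ne']
  · rfl

lemma mpow_isHermitian {m : ℕ} (M : Matrix (Fin m) (Fin m) ℂ) (t : ℝ) :
    (mpow M t).IsHermitian := by
  unfold mpow
  split_ifs with h
  · rw [Matrix.IsHermitian.cfc, Unitary.conjStarAlgAut_apply]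
    refine isHermitian_mul_mul_conjTranspose _ ?_
    rw [isHermitian_diagonal_iff]
    intro i
    simp [IsSelfAdjoint]
  · exact isHermitian_zero

lemma sum_smul_vecMulVec_mulVec {n : ℕ} (φ : Fin n → (Fin n → ℂ)) (r : Fin n → ℝ)
    (v : Fin n → ℂ) :
    (∑ i, (r i : ℂ) • vecMulVec (φ i) (star (φ i))) *ᵥ v
      = ∑ i, ((r i : ℂ) * (star (φ i) ⬝ᵥ v)) • φ i := by
  rw [sum_mulVec]
  refine Finset.sum_congr rfl fun i _ => ?_
  rw [smul_mulVec, vecMulVec_mulVec, op_smul_eq_smul, smul_smul]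

/-- Let `ρ` be a density matrix and `σ` positive semi-definite on `ℂ^n`, with eigenvalue
decompositions `σ = ∑ j, s j • |ψ j⟩⟨ψ j|` and `ρ = ∑ i, r i • |φ i⟩⟨φ i|` (orthonormal
eigenvectors, nonnegative eigenvalues), and set `μ j := ∑ i, r i * |⟨φ i|ψ j⟩|²`. Then for
every `α ∈ (0,1)`, with `β = (1-α)/(2α)` and `C_α = σ^β ρ σ^β`, one has
`tr(C_α^α) ≤ n^α * ∑ j, (s j)^(1-α) * (μ j)^α`. -/
theorem trace_sandwich_pow_le {n : ℕ} (ρ σ : Matrix (Fin n) (Fin n) ℂ)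
    (hρ : ρ.PosSemidef) (hρtr : ρ.trace = 1) (hσ : σ.PosSemidef)
    (ψ φ : Fin n → (Fin n → ℂ)) (s r : Fin n → ℝ)
    (hψ : ∀ i j, star (ψ i) ⬝ᵥ ψ j = if i = j then (1 : ℂ) else 0)
    (hφ : ∀ i j, star (φ i) ⬝ᵥ φ j = if i = j then (1 : ℂ) else 0)
    (hs : ∀ j, 0 ≤ s j) (hr : ∀ i, 0 ≤ r i)
    (hσdec : σ = ∑ j, (s j : ℂ) • vecMulVec (ψ j) (star (ψ j)))
    (hρdec : ρ = ∑ i, (r i : ℂ) • vecMulVec (φ i) (star (φ i)))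
    (α : ℝ) (hα : α ∈ Set.Ioo (0 : ℝ) 1) :
    (mpow (mpow σ ((1 - α) / (2 * α)) * ρ * mpow σ ((1 - α) / (2 * α))) α).trace.re ≤
      (n : ℝ) ^ α *
        ∑ j, (s j) ^ (1 - α) * (∑ i, r i * Complex.normSq (star (φ i) ⬝ᵥ ψ j)) ^ α := by
  obtain ⟨hα0, hα1⟩ := hα
  set β := (1 - α) / (2 * α) with hβ
  have hβ0 : 0 < β := by have := sub_pos.2 hα1; positivity
  set A := mpow σ β with hA
  have hAH : Aᴴ = A := mpow_isHermitian σ β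
  have hAψ : ∀ j, A *ᵥ ψ j = ((s j ^ β : ℝ) : ℂ) • ψ j := by
    intro j
    rw [hA, mpow, dif_pos hσ.isHermitian, ← rpow0_eq hβ0]
    refine cfc_mulVec_of_eigenvector hσ.isHermitian (fun x => rpow0 x β) _ _ ?_
    rw [hσdec, sum_smul_vecMulVec_mulVec]
    simp [hψ]
  have hC : (A * ρ * A).PosSemidef := by
    have := hρ.mul_mul_conjTranspose_same A
    rwa [hAH] at this
  have hexp : ∀ j, (star (ψ j) ⬝ᵥ ((A * ρ * A) *ᵥ ψ j)).re
      = (s j ^ β) ^ 2 * ∑ i, r i * Complex.normSq (star (φ i) ⬝ᵥ ψ j) := by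
    intro j
    have hρψ : star (ψ j) ⬝ᵥ (ρ *ᵥ ψ j)
        = ((∑ i, r i * Complex.normSq (star (φ i) ⬝ᵥ ψ j) : ℝ) : ℂ) := by
      rw [hρdec, sum_smul_vecMulVec_mulVec, dotProduct_sum]
      push_cast
      refine Finset.sum_congr rfl fun i _ => ?_
      rw [dotProduct_smul, smul_eq_mul, ← Complex.mul_conj, mul_assoc, ← RCLike.star_def,
        star_dotProduct]
      simp [dotProduct_comm]
    have hleft : star (ψ j) ᵥ* A = ((s j ^ β : ℝ) : ℂ) • star (ψ j) := by
      have := congrArg star (hAψ j)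
      rw [star_mulVec, hAH] at this
      rw [this, star_smul, RCLike.star_def, Complex.conj_ofReal]
    have : star (ψ j) ⬝ᵥ ((A * ρ * A) *ᵥ ψ j)
        = (((s j ^ β) ^ 2 * ∑ i, r i * Complex.normSq (star (φ i) ⬝ᵥ ψ j) : ℝ) : ℂ) := by
      rw [← mulVec_mulVec, ← mulVec_mulVec, dotProduct_mulVec, hleft, hAψ, mulVec_smul,
        dotProduct_smul, smul_dotProduct, hρψ, smul_eq_mul, smul_eq_mul, Complex.ofReal_mul,
        Complex.ofReal_pow]
      ring
    rw [this, Complex.ofReal_re]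
  have hfun : (fun x => rpow0 x α) = fun x : ℝ => x ^ α := funext fun x => rpow0_eq hα0 x
  have hmain := trace_cfc_le_sum_expect hC (fun x : ℝ => x ^ α)
    (Real.concaveOn_rpow hα0.le hα1.le) ψ hψ
  have hμ : ∀ j, 0 ≤ ∑ i, r i * Complex.normSq (star (φ i) ⬝ᵥ ψ j) := fun j =>
    Finset.sum_nonneg fun i _ => mul_nonneg (hr i) (Complex.normSq_nonneg _)
  have hterm : ∀ j, ((star (ψ j) ⬝ᵥ ((A * ρ * A) *ᵥ ψ j)).re) ^ α
      = s j ^ (1 - α) * (∑ i, r i * Complex.normSq (star (φ i) ⬝ᵥ ψ j)) ^ α := by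
    intro j
    rw [hexp, Real.mul_rpow (by positivity) (hμ j), ← Real.rpow_natCast, ← Real.rpow_mul (hs j),
      ← Real.rpow_mul (hs j)]
    congr 2
    rw [hβ]
    push_cast
    field_simp
  rw [mpow, dif_pos hC.isHermitian, hfun]
  refine hmain.trans ?_
  simp only [hterm]
  have hn : 1 ≤ (n : ℝ) := by
    rcases Nat.eq_zero_or_pos n with rfl | h
    · simp [Matrix.trace] at hρtr
    · exact_mod_cast h
  exact le_mul_of_one_le_left
    (Finset.sum_nonneg fun j _ => mul_nonneg (Real.rpow_nonneg (hs j) _)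
      (Real.rpow_nonneg (hμ j) _))
    (Real.one_le_rpow hn hα0.le)
end

section
/- Let 0 < c < 1 and let ρ = [[1,0],[0,0]] and σ = [[1,c],[c,1]] be 2×2 complex matrices. Then ρ is a density matrix equal to the projection onto its own support, σ is positive definite, the support of ρ is strictly contained in the support of σ, ρσ ≠ σρ, and the 0-relative Rényi entropy satisfies D̃_0(ρ||σ) = −log tr(ρσ) = 0. -/
/-!
`ρ` is the rank-one projection onto the first coordinate axis. A Hermitian idempotent has spectrum
inside `{0, 1}`, where the indicator of `x ≠ 0` agrees with the identity, so the functional calculus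
returns the matrix itself (`suppProj_eq_self_of_isIdempotentElem`); hence `Π_ρ = ρ` and
`tr(Π_ρ σ) = σ₀₀ = 1`. Writing `σ = (1 - c) I + c J`, with `J` the all-ones matrix, exhibits `σ` as
a positive definite plus a positive semidefinite matrix. It is then invertible, so its support is
the whole space, while the second basis vector is not in the support of `ρ`. The off-diagonal entry
`c ≠ 0` obstructs commutation.
-/

open Matrix Filter ComplexOrder

lemma suppProj_eq_self_of_isIdempotentElem {m : ℕ} {M : Matrix (Fin m) (Fin m) ℂ}
    (hM : M.IsHermitian) (hid : IsIdempotentElem M) : suppProj M = M := by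
  have hsa : IsSelfAdjoint M := hM
  rw [suppProj, dif_pos hM, ← hM.cfc_eq]
  conv_rhs => rw [← cfc_id ℝ M]
  refine cfc_congr fun x hx => ?_
  rcases hid.spectrum_subset ℝ hx with rfl | rfl <;> simp

lemma posDef_of_offDiag {c : ℝ} (hc0 : 0 < c) (hc1 : c < 1) :
    (!![1, (c : ℂ); (c : ℂ), 1] : Matrix (Fin 2) (Fin 2) ℂ).PosDef := by
  have hdecomp : (!![1, (c : ℂ); (c : ℂ), 1] : Matrix (Fin 2) (Fin 2) ℂ) =
      ((1 - c : ℝ) : ℂ) • 1 + (c : ℂ) • vecMulVec 1 (star 1) := by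
    ext i j
    fin_cases i <;> fin_cases j <;> simp
  have h1 : (0 : ℂ) < ((1 - c : ℝ) : ℂ) := by
    rw [Complex.zero_lt_real]
    linarith
  have h2 : (0 : ℂ) ≤ (c : ℂ) := Complex.zero_le_real.2 hc0.le
  rw [hdecomp]
  exact (PosDef.one.smul h1).add_posSemidef ((posSemidef_vecMulVec_self_star 1).smul h2)

/-- For `0 < c < 1`, `ρ = [[1,0],[0,0]]` and `σ = [[1,c],[c,1]]`: `ρ` is a density matrix
equal to the projection onto its own support, `σ` is positive definite, `supp ρ` is strictly
contained in `supp σ`, `ρ` and `σ` do not commute, and `D̃₀(ρ‖σ) = - log tr(ρσ) = 0`. -/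
theorem counterexample_basic_properties (c : ℝ) (hc0 : 0 < c) (hc1 : c < 1)
    (ρ σ : Matrix (Fin 2) (Fin 2) ℂ)
    (hρdef : ρ = !![1, 0; 0, 0]) (hσdef : σ = !![1, (c : ℂ); (c : ℂ), 1]) :
    (ρ.PosSemidef ∧ ρ.trace = 1) ∧ suppProj ρ = ρ ∧ σ.PosDef ∧ msupp ρ < msupp σ ∧
      ρ * σ ≠ σ * ρ ∧ relRenyi0 ρ σ = - Real.log ((ρ * σ).trace.re) ∧ relRenyi0 ρ σ = 0 := by
  have hherm : ρ.IsHermitian := by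
    subst hρdef
    ext i j
    fin_cases i <;> fin_cases j <;> simp
  have hid : ρ * ρ = ρ := by
    subst hρdef
    ext i j
    fin_cases i <;> fin_cases j <;> simp
  have hpsd : ρ.PosSemidef := by
    have h := posSemidef_conjTranspose_mul_self ρ
    rwa [hherm.eq, hid] at h
  have hproj : suppProj ρ = ρ := suppProj_eq_self_of_isIdempotentElem hherm hid
  have hpd : σ.PosDef := hσdef ▸ posDef_of_offDiag hc0 hc1
  have htop : msupp σ = ⊤ :=
    LinearMap.range_eq_top.2 (mulVec_surjective_iff_isUnit.2 hpd.isUnit)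
  have htr : (ρ * σ).trace = 1 := by
    simp [hρdef, hσdef, trace_fin_two]
  refine ⟨⟨hpsd, by simp [hρdef, trace_fin_two]⟩, hproj, hpd, ?_, ?_, ?_, ?_⟩
  · rw [htop, lt_top_iff_ne_top]
    intro h
    have hmem : (![0, 1] : Fin 2 → ℂ) ∈ msupp ρ := h ▸ Submodule.mem_top
    obtain ⟨v, hv⟩ := hmem
    have hv1 := congrFun hv 1
    simp [hρdef, mulVec, dotProduct] at hv1
  · intro h
    have h01 := congrFun (congrFun h 0) 1
    simp [hρdef, hσdef, mul_apply] at h01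
    exact hc0.ne' h01
  · rw [relRenyi0, hproj]
  · rw [relRenyi0, hproj, htr]
    simp
end

section
/- Let 0 < c < 1, ρ = [[1,0],[0,0]] and σ = [[1,c],[c,1]] be 2×2 complex matrices, α ∈ (0,1), and β = (1−α)/(2α). Then the matrix C_α = σ^β ρ σ^β has eigenvalues λ_1 = ((1+c)^{2β} + (1−c)^{2β})/2 and λ_2 = 0; in particular tr(C_α^α) = (((1+c)^{2β} + (1−c)^{2β})/2)^α. -/
/-!
A Hermitian `2 × 2` matrix has its eigenvalues determined by trace and determinant
(`eigenvalues_cases`), and on two eigenvalues any function agrees with an affine one, so functional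
calculus is affine in the matrix (`cfc_eq_affine`). For `σ`, with eigenvalues `1 ± c`, this gives
`σ^β = [[s, d], [d, s]]` with `s, d = ((1+c)^β ± (1-c)^β)/2`. As `ρ` is the projection onto the
first basis vector, `σ^β ρ σ^β = v vᵀ` with `v = (s, d)`: its determinant is `0` and its trace is
`s² + d² = ((1+c)^{2β} + (1-c)^{2β})/2`, which yields its spectrum and the trace of its powers.
-/

open Matrix Filter ComplexOrder

theorem eigenvalues_cases {M : Matrix (Fin 2) (Fin 2) ℂ} (hM : M.IsHermitian) {a b : ℝ}
    (ht : M.trace = ((a + b : ℝ) : ℂ)) (hd : M.det = ((a * b : ℝ) : ℂ)) :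
    (hM.eigenvalues 0 = a ∧ hM.eigenvalues 1 = b) ∨
      (hM.eigenvalues 0 = b ∧ hM.eigenvalues 1 = a) := by
  have h1 : hM.eigenvalues 0 + hM.eigenvalues 1 = a + b := by
    have h := hM.trace_eq_sum_eigenvalues
    rw [ht, Fin.sum_univ_two] at h
    apply Complex.ofReal_injective
    rw [h]
    push_cast
    rfl
  have h2 : hM.eigenvalues 0 * hM.eigenvalues 1 = a * b := by
    have h := hM.det_eq_prod_eigenvalues
    rw [hd, Fin.prod_univ_two] at h
    apply Complex.ofReal_injective
    rw [h]
    push_cast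
    rfl
  have h3 : (hM.eigenvalues 0 - a) * (hM.eigenvalues 0 - b) = 0 := by
    linear_combination hM.eigenvalues 0 * h1 - h2
  rcases mul_eq_zero.mp h3 with h | h
  · left; constructor <;> linarith
  · right; constructor <;> linarith

theorem cfc_eq_affine {n : ℕ} {M : Matrix (Fin n) (Fin n) ℂ} (hM : M.IsHermitian)
    (f : ℝ → ℝ) (p q : ℝ) (hf : ∀ i, f (hM.eigenvalues i) = p * hM.eigenvalues i + q) :
    hM.cfc f = (p : ℂ) • M + (q : ℂ) • (1 : Matrix (Fin n) (Fin n) ℂ) := by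
  conv_rhs => rw [hM.spectral_theorem]
  rw [← map_one (Unitary.conjStarAlgAut ℂ _ hM.eigenvectorUnitary), ← map_smul, ← map_smul,
    ← map_add, Matrix.IsHermitian.cfc]
  congr 1
  ext i j
  by_cases h : i = j
  · subst h
    simp [hf]
  · simp [h]

theorem trace_cfc {n : ℕ} {M : Matrix (Fin n) (Fin n) ℂ} (hM : M.IsHermitian) (f : ℝ → ℝ) :
    (hM.cfc f).trace = ∑ i, (f (hM.eigenvalues i) : ℂ) := by
  rw [Matrix.IsHermitian.cfc, Unitary.conjStarAlgAut_apply, Matrix.trace_mul_cycle,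
    Unitary.coe_star_mul_self, one_mul, Matrix.trace_diagonal]
  rfl

theorem mpow_sigma (c : ℝ) (hc0 : 0 < c) (hc1 : c < 1) (β : ℝ) :
    mpow !![1, (c : ℂ); (c : ℂ), 1] β =
      !![((((1 + c) ^ β + (1 - c) ^ β) / 2 : ℝ) : ℂ), ((((1 + c) ^ β - (1 - c) ^ β) / 2 : ℝ) : ℂ);
         ((((1 + c) ^ β - (1 - c) ^ β) / 2 : ℝ) : ℂ),
         ((((1 + c) ^ β + (1 - c) ^ β) / 2 : ℝ) : ℂ)] := by
  have hM : (!![1, (c : ℂ); (c : ℂ), 1]).IsHermitian := by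
    ext i j
    fin_cases i <;> fin_cases j <;> simp
  have hp : rpow0 (1 + c) β = (1 + c) ^ β := if_neg (by linarith)
  have hm : rpow0 (1 - c) β = (1 - c) ^ β := if_neg (by linarith)
  generalize (1 + c) ^ β = A at *
  generalize (1 - c) ^ β = B at *
  have hev := eigenvalues_cases hM (a := 1 + c) (b := 1 - c)
    (by simp [Matrix.trace_fin_two]) (by simp [Matrix.det_fin_two]; ring)
  -- The affine function through `(1 + c, A)` and `(1 - c, B)`.
  have key := cfc_eq_affine hM (fun x => rpow0 x β) ((A - B) / (2 * c))
    ((A + B) / 2 - (A - B) / (2 * c)) (by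
      intro i
      rcases hev with ⟨h0, h1⟩ | ⟨h0, h1⟩ <;> fin_cases i <;>
        simp only [Fin.zero_eta, Fin.mk_one, h0, h1, hp, hm] <;> field_simp <;> ring)
  rw [mpow, dif_pos hM, key]
  have hc : (c : ℂ) ≠ 0 := by exact_mod_cast hc0.ne'
  ext i j
  fin_cases i <;> fin_cases j <;> simp <;> field_simp

/-- For `0 < c < 1`, `ρ = [[1,0],[0,0]]`, `σ = [[1,c],[c,1]]`, `α ∈ (0,1)` and
`β = (1-α)/(2α)`, the matrix `C_α = σ^β ρ σ^β` has eigenvalues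
`λ₁ = ((1+c)^(2β) + (1-c)^(2β))/2` and `λ₂ = 0`; in particular `tr(C_α^α) = λ₁^α`. -/
theorem counterexample_eigenvalues (c : ℝ) (hc0 : 0 < c) (hc1 : c < 1)
    (ρ σ : Matrix (Fin 2) (Fin 2) ℂ)
    (hρdef : ρ = !![1, 0; 0, 0]) (hσdef : σ = !![1, (c : ℂ); (c : ℂ), 1])
    (α β : ℝ) (hα : α ∈ Set.Ioo (0 : ℝ) 1) (hβ : β = (1 - α) / (2 * α)) :
    ∃ hC : (mpow σ β * ρ * mpow σ β).IsHermitian,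
      Finset.univ.val.map hC.eigenvalues =
          ({((1 + c) ^ (2 * β) + (1 - c) ^ (2 * β)) / 2, 0} : Multiset ℝ) ∧
        (mpow (mpow σ β * ρ * mpow σ β) α).trace =
          (((((1 + c) ^ (2 * β) + (1 - c) ^ (2 * β)) / 2) ^ α : ℝ) : ℂ) := by
  have hA : (1 + c) ^ (2 * β) = ((1 + c) ^ β) ^ 2 := by
    rw [mul_comm, Real.rpow_mul (by linarith), Real.rpow_two]
  have hB : (1 - c) ^ (2 * β) = ((1 - c) ^ β) ^ 2 := by
    rw [mul_comm, Real.rpow_mul (by linarith), Real.rpow_two]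
  have hApos : 0 < (1 + c) ^ β := Real.rpow_pos_of_pos (by linarith) _
  rw [hσdef, hρdef, mpow_sigma c hc0 hc1, hA, hB]
  generalize (1 + c) ^ β = A at *
  generalize (1 - c) ^ β = B at *
  have hl : (A ^ 2 + B ^ 2) / 2 ≠ 0 := by positivity
  generalize hX : (!![(((A + B) / 2 : ℝ) : ℂ), (((A - B) / 2 : ℝ) : ℂ);
      (((A - B) / 2 : ℝ) : ℂ), (((A + B) / 2 : ℝ) : ℂ)] * !![1, 0; 0, 0] *
      !![(((A + B) / 2 : ℝ) : ℂ), (((A - B) / 2 : ℝ) : ℂ);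
      (((A - B) / 2 : ℝ) : ℂ), (((A + B) / 2 : ℝ) : ℂ)] : Matrix (Fin 2) (Fin 2) ℂ) = X
  have hC : X.IsHermitian := by
    rw [← hX]
    ext i j
    fin_cases i <;> fin_cases j <;> simp [Matrix.mul_apply, Fin.sum_univ_two] <;> ring
  have hev := eigenvalues_cases hC (a := (A ^ 2 + B ^ 2) / 2) (b := 0)
    (by rw [← hX]; simp [Matrix.trace_fin_two]; ring)
    (by rw [← hX]; simp; ring)
  have h0 : rpow0 0 α = 0 := if_pos rfl
  have h1 : rpow0 ((A ^ 2 + B ^ 2) / 2) α = ((A ^ 2 + B ^ 2) / 2) ^ α := if_neg hl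
  refine ⟨hC, ?_, ?_⟩
  · have hm : Finset.univ.val.map hC.eigenvalues = {hC.eigenvalues 0, hC.eigenvalues 1} := rfl
    rw [hm]
    rcases hev with ⟨e0, e1⟩ | ⟨e0, e1⟩ <;> rw [e0, e1]
    exact Multiset.pair_comm _ _
  · rw [mpow, dif_pos hC, trace_cfc, Fin.sum_univ_two]
    rcases hev with ⟨e0, e1⟩ | ⟨e0, e1⟩ <;> rw [e0, e1, h0, h1] <;> simp
end

section
/- Let ρ be a density matrix and σ a positive semi-definite matrix on an n-dimensional complex Hilbert space with supp ρ = supp σ, let α ∈ (0,1), β = (1−α)/(2α), and let σ = Σ_{j=1}^n s_j π_j with rank-one spectral projections π_j = |ψ_j⟩⟨ψ_j| coming from an orthonormal eigenbasis of σ. Then σ^β ρ σ^β ≤ n · Σ_{j=1}^n (s_j^{2β} μ_j) π_j in the Loewner order, where μ_j := ⟨ψ_j| ρ |ψ_j⟩. -/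
/-!
Let `U` be the unitary matrix with columns `ψ j`, so that `σ = U * diagonal s * Uᴴ`. Independence of
the functional calculus from the chosen eigenbasis (`cfc_eq_of_diagonalization`) gives
`σ ^ β = U * diagonal (s ^ β) * Uᴴ`. Hence, after conjugation by `U`, the claim is the pinching
inequality `B ≤ n • diagonal B.diag` (`posSemidef_pinching`) for the positive semi-definite matrix
`B = diagonal (s ^ β) * (Uᴴ * ρ * U) * diagonal (s ^ β)`, whose `j`-th diagonal entry is
`s j ^ (2 * β) * ⟨ψ j|ρ|ψ j⟩`. The pinching inequality follows by writing
`2 • (n • diagonal B.diag - B)` as the sum over all `j, k` of `(E j - E k)ᴴ * B * (E j - E k)`,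
where `E j` is the projection onto the `j`-th basis vector.
-/

open Matrix Filter ComplexOrder

/-- The pinching inequality for the standard basis: `B ≤ n • diagonal B.diag`. -/
lemma posSemidef_pinching {n : ℕ} {B : Matrix (Fin n) (Fin n) ℂ} (hB : B.PosSemidef) :
    ((n : ℂ) • diagonal B.diag - B).PosSemidef := by
  set E : Fin n → Matrix (Fin n) (Fin n) ℂ := fun j => diagonal (Pi.single j 1) with hE
  have hE1 : ∑ j, E j = 1 := by
    ext a b
    simp only [hE, Matrix.sum_apply, diagonal_apply, one_apply]
    by_cases h : a = b <;> simp [h, Pi.single_apply]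
  have hE2 : ∑ j, E j * B * E j = diagonal B.diag := by
    ext a b
    simp only [hE, Matrix.sum_apply, mul_diagonal, diagonal_mul, diagonal_apply, Pi.single_apply]
    by_cases h : a = b <;> simp [h]
  have hEH : ∀ j, (E j)ᴴ = E j := by
    intro j
    ext a b
    simp only [hE, conjTranspose_apply, diagonal_apply, Pi.single_apply]
    by_cases h : a = b
    · subst h
      by_cases h' : a = j <;> simp [h']
    · simp [h, Ne.symm h]
  have key : (n : ℂ) • diagonal B.diag - B
      = (1 / 2 : ℝ) • ∑ j, ∑ k, (E j - E k)ᴴ * B * (E j - E k) := by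
    have h1 : ∑ j, ∑ k, E j * B * E k = B := by
      simp_rw [← Finset.mul_sum, hE1, mul_one, ← Finset.sum_mul, hE1, one_mul]
    have h2 : ∑ j, ∑ k, E k * B * E j = B := by
      rw [Finset.sum_comm]; exact h1
    have h3 : ∑ j, ∑ _k : Fin n, E j * B * E j = n • diagonal B.diag := by
      simp [hE2, ← Finset.mul_sum]
    have h4 : ∑ _j : Fin n, ∑ k, E k * B * E k = n • diagonal B.diag := by
      rw [Finset.sum_comm]; exact h3
    have h5 : ∀ j k, (E j - E k)ᴴ * B * (E j - E k)
        = E j * B * E j + E k * B * E k - (E j * B * E k + E k * B * E j) := by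
      intro j k
      rw [conjTranspose_sub, hEH, hEH]
      noncomm_ring
    simp_rw [h5, Finset.sum_sub_distrib, Finset.sum_add_distrib, h1, h2, h3, h4]
    rw [← Nat.cast_smul_eq_nsmul ℂ]
    module
  rw [key]
  refine PosSemidef.smul ?_ (by norm_num)
  exact posSemidef_sum _ fun j _ => posSemidef_sum _ fun k _ => hB.conjTranspose_mul_mul_same _

/-- The functional calculus of a Hermitian matrix may be computed in any orthonormal eigenbasis,
not only in the one chosen by `IsHermitian.eigenvectorUnitary`. -/
lemma cfc_eq_of_diagonalization {n : ℕ} {A U : Matrix (Fin n) (Fin n) ℂ} (hA : A.IsHermitian)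
    (hU : Uᴴ * U = 1) (s : Fin n → ℝ) (hdec : A = U * diagonal (fun j => (s j : ℂ)) * Uᴴ)
    (f : ℝ → ℝ) :
    hA.cfc f = U * diagonal (fun j => (f (s j) : ℂ)) * Uᴴ := by
  have hU' : U * Uᴴ = 1 := mul_eq_one_comm.mp hU
  set V : Matrix (Fin n) (Fin n) ℂ := (hA.eigenvectorUnitary : Matrix (Fin n) (Fin n) ℂ) with hV
  have hV1 : Vᴴ * V = 1 := by
    simpa [star_eq_conjTranspose] using Unitary.coe_star_mul_self hA.eigenvectorUnitary
  have hV2 : V * Vᴴ = 1 := mul_eq_one_comm.mp hV1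
  have hspec : A = V * diagonal (fun j => (hA.eigenvalues j : ℂ)) * Vᴴ := by
    conv_lhs => rw [hA.spectral_theorem]
    rfl
  have hcfc : hA.cfc f = V * diagonal (fun j => (f (hA.eigenvalues j) : ℂ)) * Vᴴ := by
    rfl
  -- The change of basis intertwines the two diagonal forms, so its `(i, j)` entry vanishes
  -- unless the `i`-th and `j`-th eigenvalues agree; hence it also intertwines their images.
  have hW : diagonal (fun j => (hA.eigenvalues j : ℂ)) * (Vᴴ * U)
      = (Vᴴ * U) * diagonal (fun j => (s j : ℂ)) := by
    calc _ = (Vᴴ * V) * diagonal (fun j => (hA.eigenvalues j : ℂ)) * (Vᴴ * U) := by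
            rw [hV1, one_mul]
      _ = Vᴴ * A * U := by
            rw [congrArg (fun X => Vᴴ * X * U) hspec]
            simp only [Matrix.mul_assoc]
      _ = (Vᴴ * U) * diagonal (fun j => (s j : ℂ)) * (Uᴴ * U) := by
            rw [congrArg (fun X => Vᴴ * X * U) hdec]
            simp only [Matrix.mul_assoc]
      _ = _ := by rw [hU, mul_one]
  have hfW : diagonal (fun j => (f (hA.eigenvalues j) : ℂ)) * (Vᴴ * U)
      = (Vᴴ * U) * diagonal (fun j => (f (s j) : ℂ)) := by
    ext i j
    have h := congrFun (congrFun hW i) j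
    rw [diagonal_mul, mul_diagonal, mul_comm] at h ⊢
    by_cases h0 : (Vᴴ * U) i j = 0
    · simp [h0]
    · have : hA.eigenvalues i = s j := by exact_mod_cast mul_left_cancel₀ h0 h
      rw [this]
  calc hA.cfc f = V * (diagonal (fun j => (f (hA.eigenvalues j) : ℂ)) * (Vᴴ * U)) * Uᴴ := by
        rw [hcfc]
        simp only [Matrix.mul_assoc, hU', Matrix.mul_one]
    _ = (V * Vᴴ) * U * diagonal (fun j => (f (s j) : ℂ)) * Uᴴ := by
        rw [hfW]
        simp only [Matrix.mul_assoc]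
    _ = _ := by rw [hV2, one_mul]

/-- Let `ρ` be a density matrix and `σ` positive semi-definite on `ℂ^n` with
`supp ρ = supp σ`, let `α ∈ (0,1)`, `β = (1-α)/(2α)`, and let `σ = ∑ j, s j • |ψ j⟩⟨ψ j|` be
an eigenvalue decomposition of `σ` coming from an orthonormal eigenbasis. Then
`σ^β ρ σ^β ≤ n • ∑ j, (s j)^(2β) * μ j • |ψ j⟩⟨ψ j|` in the Loewner order, where
`μ j = ⟨ψ j|ρ|ψ j⟩`. -/
theorem sandwich_le_pinched {n : ℕ} (ρ σ : Matrix (Fin n) (Fin n) ℂ)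
    (hρ : ρ.PosSemidef) (hρtr : ρ.trace = 1) (hσ : σ.PosSemidef)
    (hsupp : msupp ρ = msupp σ)
    (ψ : Fin n → (Fin n → ℂ)) (s : Fin n → ℝ)
    (hψ : ∀ i j, star (ψ i) ⬝ᵥ ψ j = if i = j then (1 : ℂ) else 0)
    (hs : ∀ j, 0 ≤ s j)
    (hσdec : σ = ∑ j, (s j : ℂ) • vecMulVec (ψ j) (star (ψ j)))
    (α β : ℝ) (hα : α ∈ Set.Ioo (0 : ℝ) 1) (hβ : β = (1 - α) / (2 * α)) :
    ((n : ℂ) • ∑ j, (((s j ^ (2 * β) * (star (ψ j) ⬝ᵥ ρ.mulVec (ψ j)).re : ℝ)) : ℂ) •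
          vecMulVec (ψ j) (star (ψ j)) -
        mpow σ β * ρ * mpow σ β).PosSemidef := by
  set U : Matrix (Fin n) (Fin n) ℂ := Matrix.of fun i j => ψ j i with hUdef
  have hU : Uᴴ * U = 1 := by
    ext i j
    have h := hψ i j
    simpa [hUdef, Matrix.mul_apply, dotProduct, one_apply] using h
  have hsum : ∀ d : Fin n → ℂ,
      ∑ j, d j • vecMulVec (ψ j) (star (ψ j)) = U * diagonal d * Uᴴ := by
    intro d
    ext a b
    rw [Matrix.sum_apply, Matrix.mul_apply]
    refine Finset.sum_congr rfl fun j _ => ?_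
    simp only [hUdef, mul_diagonal, Matrix.smul_apply, vecMulVec_apply, conjTranspose_apply,
      Matrix.of_apply, Pi.star_apply, smul_eq_mul]
    ring
  have hβ0 : 0 < β := by
    rw [hβ]
    exact div_pos (by linarith [hα.2]) (by linarith [hα.1])
  set d : Fin n → ℂ := fun j => (rpow0 (s j) β : ℂ) with hd
  have hpow : mpow σ β = U * diagonal d * Uᴴ := by
    rw [mpow, dif_pos hσ.1]
    exact cfc_eq_of_diagonalization hσ.1 hU s (hσdec.trans (hsum _)) _
  have hdd : ∀ j, rpow0 (s j) β * rpow0 (s j) β = s j ^ (2 * β) := by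
    intro j
    rcases (hs j).eq_or_lt with h | h
    · simp [rpow0, ← h, Real.zero_rpow (by positivity : 2 * β ≠ 0)]
    · simp only [rpow0, h.ne', if_false, Real.rpow_eq_pow]
      rw [← Real.rpow_add h, two_mul]
  have hdH : (diagonal d)ᴴ = diagonal d := by
    rw [diagonal_conjTranspose]
    congr 1
    ext j
    simp [hd]
  set B := diagonal d * (Uᴴ * ρ * U) * diagonal d with hBdef
  have hB : B.PosSemidef := by
    have h := (hρ.conjTranspose_mul_mul_same U).conjTranspose_mul_mul_same (diagonal d)
    rwa [hdH] at h
  have hdiag : ∀ j, (((s j ^ (2 * β) * (star (ψ j) ⬝ᵥ ρ.mulVec (ψ j)).re : ℝ)) : ℂ) = B j j := by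
    intro j
    have h1 : (Uᴴ * ρ * U) j j = star (ψ j) ⬝ᵥ ρ.mulVec (ψ j) := by
      rw [Matrix.mul_assoc]
      rfl
    -- The diagonal of a Hermitian matrix is real, so nothing is lost by taking real parts.
    have h2 : (((star (ψ j) ⬝ᵥ ρ.mulVec (ψ j)).re : ℝ) : ℂ) = star (ψ j) ⬝ᵥ ρ.mulVec (ψ j) := by
      rw [← h1]
      exact (hρ.conjTranspose_mul_mul_same U).1.coe_re_apply_self j
    rw [hBdef, mul_diagonal, diagonal_mul, h1, ← hdd j]
    push_cast
    rw [h2]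
    simp only [hd]
    ring
  have hfinal := (posSemidef_pinching hB).mul_mul_conjTranspose_same U
  convert hfinal using 1
  simp_rw [hdiag]
  rw [hsum, hpow, hBdef]
  simp only [Matrix.mul_sub, Matrix.sub_mul, Matrix.mul_smul, Matrix.smul_mul, Matrix.mul_assoc]
  rfl
end

section
/- Let A and B be positive semi-definite n×n complex matrices with A ≤ B in the Loewner order, and let α ∈ (0,1). Then tr(A^α) ≤ tr(B^α). In particular, if C and Q are positive semi-definite with C ≤ n·Q, then tr(C^α) ≤ n^α · tr(Q^α). -/
/-!
By the Löwner–Heinz theorem, `x ↦ x ^ α` is operator monotone for `α ∈ (0,1)`: `A ≤ B` implies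
`A ^ α ≤ B ^ α`. This is `CFC.rpow_le_rpow`, applied in the C⋆-algebra of complex matrices with the
L2 operator norm and the Loewner order; `mpow_eq_cfc` identifies `mpow` with the power used there.
The trace of a positive semi-definite matrix is nonnegative, which gives the first claim
(`trace_mpow_le`). The second one is the first for `C ≤ n • Q`, combined with the homogeneity
`(r • Q) ^ α = r ^ α • Q ^ α` (`mpow_smul`).
-/


open Matrix Filter ComplexOrder

/-- Since `α > 0`, the convention `0 ^ α = 0` agrees with `Real.rpow`, so `mpow` is the continuous
functional calculus of a continuous function. -/
theorem mpow_eq_cfc {n : ℕ} {α : ℝ} (hα : 0 < α) {A : Matrix (Fin n) (Fin n) ℂ}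
    (hA : A.PosSemidef) :
    mpow A α = cfc (fun x : ℝ => x ^ α) A := by
  have h0 : (fun x : ℝ => rpow0 x α) = fun x : ℝ => x ^ α := by
    funext x
    unfold rpow0
    split_ifs with hx
    · rw [hx, Real.zero_rpow hα.ne']
    · rfl
  rw [mpow, dif_pos hA.isHermitian, h0, hA.isHermitian.cfc_eq]

open scoped MatrixOrder Matrix.Norms.L2Operator in
/-- Löwner–Heinz for matrices, taken under the trace. -/
theorem trace_mpow_le {n : ℕ} {α : ℝ} (hα : α ∈ Set.Ioo (0 : ℝ) 1)
    {A B : Matrix (Fin n) (Fin n) ℂ} (hA : A.PosSemidef) (hB : B.PosSemidef)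
    (hAB : (B - A).PosSemidef) : (mpow A α).trace.re ≤ (mpow B α).trace.re := by
  have h : A ^ α ≤ B ^ α :=
    CFC.rpow_le_rpow ⟨hα.1.le, hα.2.le⟩ (Matrix.le_iff.2 hAB)
  rw [CFC.rpow_eq_cfc_real hA.nonneg, CFC.rpow_eq_cfc_real hB.nonneg,
    ← mpow_eq_cfc hα.1 hA, ← mpow_eq_cfc hα.1 hB, Matrix.le_iff] at h
  have := (Complex.le_def.1 h.trace_nonneg).1
  simpa [Matrix.trace_sub] using this

theorem mpow_smul {n : ℕ} {α : ℝ} (hα : 0 < α) (r : ℝ) (hr : 0 ≤ r)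
    {Q : Matrix (Fin n) (Fin n) ℂ} (hQ : Q.PosSemidef) :
    mpow ((r : ℂ) • Q) α = ((r ^ α : ℝ) : ℂ) • mpow Q α := by
  have hQ' : ((r : ℂ) • Q).PosSemidef := hQ.smul (by exact_mod_cast hr)
  have hsa : IsSelfAdjoint Q := hQ.isHermitian
  have hf : Continuous fun x : ℝ => x ^ α := Real.continuous_rpow_const hα.le
  rw [mpow_eq_cfc hα hQ', mpow_eq_cfc hα hQ, Complex.coe_smul, Complex.coe_smul,
    ← cfc_comp_smul r (fun x : ℝ => x ^ α) Q hf.continuousOn,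
    ← cfc_smul (r ^ α) (fun x : ℝ => x ^ α) Q hf.continuousOn]
  refine cfc_congr fun x hx => ?_
  have hx0 : 0 ≤ x := by
    rw [hQ.isHermitian.spectrum_real_eq_range_eigenvalues] at hx
    obtain ⟨i, rfl⟩ := hx
    exact hQ.eigenvalues_nonneg i
  simp only [smul_eq_mul]
  exact Real.mul_rpow hr hx0

/-- If `A ≤ B` in the Loewner order for positive semi-definite matrices `A, B`, and
`α ∈ (0,1)`, then `tr(A^α) ≤ tr(B^α)`. In particular, if `C ≤ n • Q` then
`tr(C^α) ≤ n^α * tr(Q^α)`. -/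
theorem trace_rpow_monotone {n : ℕ} (α : ℝ) (hα : α ∈ Set.Ioo (0 : ℝ) 1) :
    (∀ A B : Matrix (Fin n) (Fin n) ℂ, A.PosSemidef → B.PosSemidef →
      (B - A).PosSemidef → (mpow A α).trace.re ≤ (mpow B α).trace.re) ∧
    (∀ C Q : Matrix (Fin n) (Fin n) ℂ, C.PosSemidef → Q.PosSemidef →
      ((n : ℂ) • Q - C).PosSemidef →
      (mpow C α).trace.re ≤ (n : ℝ) ^ α * (mpow Q α).trace.re) := by
  refine ⟨fun A B hA hB hAB => trace_mpow_le hα hA hB hAB, fun C Q hC hQ hCQ => ?_⟩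
  have h := trace_mpow_le hα hC (hQ.smul (by exact_mod_cast n.zero_le : (0 : ℂ) ≤ n)) hCQ
  have hs := mpow_smul hα.1 (n : ℝ) n.cast_nonneg hQ
  rw [Complex.ofReal_natCast] at hs
  rwa [hs, Matrix.trace_smul, smul_eq_mul, Complex.re_ofReal_mul] at h
end
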